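/- Under the setting and hypotheses of the transition-probability lemma for tridiagonal systems (B tridiagonal skew-symmetric; (λ_{n+1}/λ_n) bounded; b_{n,n−1}/λ_n → 0, b_{n,n}/λ_n → 0; k a positive integer and 0 ≤ r < k/2 with (|b_{n,n+1}|(λ_{n+1}^k/λ_n^k − 1)), (b_{n,n}/λ_n^r), (b_{n,n−1}/λ_n^r) bounded; propagators Υ^u and Galerkin propagators X^u_{(N)} as there), for every N ∈ ℕ, every t ≥ 0, every n ≤ N and every piecewise constant control u: ‖π_N Υ^u_t φ_n − X^u_{(N)}(t,0) φ_n‖ ≤ (3^{N−n}/(N−n)!) · L(N+1) · (∏_{j=N+1}^{2N−n} L(j)) · (∫_0^t |u(τ)| dτ)^{N−n+1}, where L(j) := sup_{p,q ≤ j} |b_{p,q}|. -/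

import Mathlib

/-!
The proof is an energy argument on the coordinates `y_j = ⟨φ_j, Υ_τ φ_n⟩`. They satisfy
`y_j' = -iλ_j y_j + u (By)_j`; in `d|y_j|²/dτ` the diagonal terms drop out, and, `B` being
tridiagonal and skew-symmetric, what remains is a difference of the fluxes
`Re(ȳ_j b_{j,j+1} y_{j+1})` between neighbouring levels (`sum_weight_re_triAct`,
`sum_weight_deriv`). Two consequences carry the estimate.

* The mass beyond level `m` changes only through the flux at level `m`. Its square root therefore
  grows at most at the rate `|u| |b_{m,m+1}| |y_m|`, and `|y_m|` is at most the square root of the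
  mass beyond level `m - 1`. Iterating from level `n` to level `N` bounds the square root of the mass
  beyond `N` by `∏ L(j) · (∫|u|)^{N-n} / (N-n)!` (`tail_mass`).
* The difference `w` between the exact and the Galerkin solution solves, up to level `N`, the same
  system with zero initial data, driven only by `b_{N,N+1} y_{N+1}`. One more integration gives
  `(∑_{j ≤ N} |w_j|²)^{1/2} ≤ L(N+1) ∏ L(j) · (∫|u|)^{N-n+1} / (N-n+1)!` (`difference_bound`), which
  is stronger than the claim.

The conventions of the formalization add two points. `Aop` is a sum with value `0` where it does not
converge, and for `k = 1` membership in `D(|A|^{1/2})` does not make it converge. The diagonal terms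
drop out for either value, so the flux identities hold anyway, and applied with truncated weights
`min(λ_j², R)` they show that `∑ λ_j²|y_j|²` stays finite (`weighted_energy`,
`trajectory_energy`). Secondly, the integral equation has content only where its integrand is
integrable. The energy bounds show that the integrand is bounded as long as it is integrable, and if
integrability failed from some time on, the trajectory would be frozen at `φ_n`, where the integrand
is explicit (`intervalIntegrable_of_integral_eq`).
-/

/- STATEMENT 15 (explicit Galerkin error estimate for tridiagonal systems):
`‖π_N Υ^u_t φ_n − X^u_{(N)}(t,0)φ_n‖ ≤ (3^{N−n}/(N−n)!) L(N+1) ∏_{j=N+1}^{2N−n} L(j)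
(∫₀ᵗ|u|)^{N−n+1}`. -/

open Filter Topology MeasureTheory
open scoped ComplexInnerProductSpace

noncomputable section

/-- The domain `D(|A|^s)`. -/
def domAs {H : Type*} [NormedAddCommGroup H] [InnerProductSpace ℂ H]
    (φ : HilbertBasis ℕ ℂ H) (lam : ℕ → ℝ) (s : ℝ) : Set H :=
  {ψ : H | Summable fun n => lam n ^ (2 * s) * ‖φ.repr ψ n‖ ^ 2}

/-- The `s`-norm. -/
def sNorm {H : Type*} [NormedAddCommGroup H] [InnerProductSpace ℂ H]
    (φ : HilbertBasis ℕ ℂ H) (lam : ℕ → ℝ) (s : ℝ) (ψ : H) : ℝ :=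
  Real.sqrt (∑' n, lam n ^ (2 * s) * ‖φ.repr ψ n‖ ^ 2)

/-- The skew-adjoint operator `Aψ = Σ_n (−iλ_n)⟨φ_n,ψ⟩φ_n`. -/
def Aop {H : Type*} [NormedAddCommGroup H] [InnerProductSpace ℂ H] [CompleteSpace H]
    (φ : HilbertBasis ℕ ℂ H) (lam : ℕ → ℝ) (ψ : H) : H :=
  ∑' n, (-(Complex.I * (lam n : ℂ))) • (φ.repr ψ n • φ n)

/-- The tridiagonal operator `Bψ = Σ_n (b_{n,n−1}x_{n−1} + b_{n,n}x_n + b_{n,n+1}x_{n+1})φ_n`. -/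
def BopTri {H : Type*} [NormedAddCommGroup H] [InnerProductSpace ℂ H] [CompleteSpace H]
    (φ : HilbertBasis ℕ ℂ H) (b : ℕ → ℕ → ℂ) (ψ : H) : H :=
  ∑' n, ((if n = 0 then 0 else b n (n - 1) * φ.repr ψ (n - 1)) +
      b n n * φ.repr ψ n + b n (n + 1) * φ.repr ψ (n + 1)) • φ n

/-- The orthogonal projection `π_N` onto `L_N = span{φ_0,…,φ_N}`. -/
def projN {H : Type*} [NormedAddCommGroup H] [InnerProductSpace ℂ H] [CompleteSpace H]
    (φ : HilbertBasis ℕ ℂ H) (N : ℕ) (ψ : H) : H :=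
  ∑' n, if n ≤ N then φ.repr ψ n • φ n else 0

/-- The space `L_N = span{φ_0,…,φ_N}`. -/
def galerkinSpace {H : Type*} [NormedAddCommGroup H] [InnerProductSpace ℂ H]
    (φ : HilbertBasis ℕ ℂ H) (N : ℕ) : Set H :=
  {x : H | ∀ n, N < n → φ.repr x n = 0}

/-- `u` is piecewise constant on `[0,T]`. -/
def PiecewiseConstant (u : ℝ → ℝ) (T : ℝ) : Prop :=
  ∃ (m : ℕ) (pts : Fin (m + 1) → ℝ) (vals : Fin m → ℝ),
    pts 0 = 0 ∧ pts (Fin.last m) = T ∧ Monotone pts ∧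
      ∀ i : Fin m, ∀ t ∈ Set.Ico (pts i.castSucc) (pts i.succ), u t = vals i

/-! ### Piecewise constant controls -/

lemma PiecewiseConstant.exists_piece {u : ℝ → ℝ} {T : ℝ} (hu : PiecewiseConstant u T) :
    (∃ K : ℝ, ∀ τ ∈ Set.Ico 0 T, |u τ| ≤ K) ∧
      (∀ τ ∈ Set.Ico 0 T, ContinuousWithinAt u (Set.Ici τ) τ) ∧
      IntervalIntegrable u volume 0 T := by
  obtain ⟨m, pts, vals, h0, hT, hmono, hval⟩ := hu
  have hex : ∀ i : Fin (m + 1), ∀ τ ∈ Set.Ico 0 (pts i),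
      ∃ j : Fin m, τ ∈ Set.Ico (pts j.castSucc) (pts j.succ) := by
    intro i
    induction i using Fin.induction with
    | zero => intro τ hτ; rw [h0] at hτ; simp at hτ
    | succ i ih =>
      intro τ hτ
      by_cases h : τ < pts i.castSucc
      · exact ih τ ⟨hτ.1, h⟩
      · exact ⟨i, not_lt.mp h, hτ.2⟩
  rw [← hT]
  refine ⟨⟨∑ i, |vals i|, ?_⟩, ?_, ?_⟩
  · intro τ hτ
    obtain ⟨j, hj⟩ := hex _ τ hτ
    rw [hval j τ hj]
    exact Finset.single_le_sum (f := fun i => |vals i|) (fun i _ => abs_nonneg _)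
      (Finset.mem_univ j)
  · intro τ hτ
    obtain ⟨j, hj⟩ := hex _ τ hτ
    have : ContinuousWithinAt (fun _ : ℝ => vals j) (Set.Ici τ) τ := continuousWithinAt_const
    refine this.congr_of_eventuallyEq ?_ (hval j τ hj)
    filter_upwards [Ico_mem_nhdsGE hj.2] with s hs
    exact hval j s ⟨hj.1.trans hs.1, hs.2⟩
  · have : ∀ i : Fin (m + 1), IntervalIntegrable u volume 0 (pts i) := by
      intro i
      induction i using Fin.induction with
      | zero => rw [h0]
      | succ i ih =>
        refine ih.trans ?_
        have hle : pts i.castSucc ≤ pts i.succ := hmono (Fin.castSucc_lt_succ).le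
        rw [intervalIntegrable_iff_integrableOn_Ico_of_le hle]
        have hc : IntegrableOn (fun _ : ℝ => vals i)
            (Set.Ico (pts i.castSucc) (pts i.succ)) volume := by
          simp
        exact hc.congr_fun (fun s hs => (hval i s hs).symm) measurableSet_Ico
    exact this _

/-! ### Right derivatives and differential inequalities -/

/-- The fundamental theorem of calculus for right derivatives. -/
lemma hasDerivWithinAt_Ici_integral {g : ℝ → ℝ} {T τ : ℝ}
    (hg : IntervalIntegrable g volume 0 T) (hτ : τ ∈ Set.Ico 0 T)
    (hc : ContinuousWithinAt g (Set.Ici τ) τ) :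
    HasDerivWithinAt (fun s => ∫ x in (0 : ℝ)..s, g x) (g τ) (Set.Ici τ) τ := by
  have h1 : IntervalIntegrable g volume 0 τ := hg.mono_set (by
    rw [Set.uIcc_of_le hτ.1, Set.uIcc_of_le (hτ.1.trans hτ.2.le)]
    exact Set.Icc_subset_Icc_right hτ.2.le)
  have hm : StronglyMeasurableAtFilter g (𝓝[Set.Ioi τ] τ) volume := by
    refine ⟨Set.Ioc τ T, Ioc_mem_nhdsGT hτ.2, ?_⟩
    have := (intervalIntegrable_iff_integrableOn_Ioc_of_le (hτ.1.trans hτ.2.le)).mp hg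
    exact (this.mono_set (Set.Ioc_subset_Ioc_left hτ.1)).aestronglyMeasurable
  exact intervalIntegral.integral_hasDerivWithinAt_right h1 hm
    (hc.mono Set.Ioi_subset_Ici_self)

lemma continuousOn_integral_Icc {E : Type*} [NormedAddCommGroup E] [NormedSpace ℝ E]
    {g : ℝ → E} {T : ℝ} (hT : 0 ≤ T)
    (hg : IntervalIntegrable g volume 0 T) :
    ContinuousOn (fun s => ∫ x in (0 : ℝ)..s, g x) (Set.Icc 0 T) := by
  have := intervalIntegral.continuousOn_primitive_interval'
    (b₁ := (0 : ℝ)) (b₂ := T) (a := (0 : ℝ)) hg (by simp)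
  rwa [Set.uIcc_of_le hT] at this

/-- If `q` and `K` vanish at `0` and `q' ≤ 2 h √q` while `K' = h ≥ 0`, then `√q ≤ K`.
The square root is regularised as `√(q + ε²)` in order to differentiate it. -/
lemma sqrt_le_of_deriv_le {q q' K h : ℝ → ℝ} {T : ℝ}
    (hq0 : q 0 = 0) (hq : ∀ τ ∈ Set.Icc 0 T, 0 ≤ q τ) (hqc : ContinuousOn q (Set.Icc 0 T))
    (hq' : ∀ τ ∈ Set.Ico 0 T, HasDerivWithinAt q (q' τ) (Set.Ici τ) τ)
    (hK0 : K 0 = 0) (hKc : ContinuousOn K (Set.Icc 0 T))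
    (hK' : ∀ τ ∈ Set.Ico 0 T, HasDerivWithinAt K (h τ) (Set.Ici τ) τ)
    (hh : ∀ τ ∈ Set.Ico 0 T, 0 ≤ h τ)
    (hle : ∀ τ ∈ Set.Ico 0 T, q' τ ≤ 2 * h τ * √(q τ)) :
    ∀ τ ∈ Set.Icc 0 T, √(q τ) ≤ K τ := by
  intro τ hτ
  refine le_of_forall_pos_le_add fun ε hε => ?_
  have hpos : ∀ s ∈ Set.Icc 0 T, 0 < q s + ε ^ 2 := fun s hs => by
    have := hq s hs; positivity
  have key := image_le_of_deriv_right_le_deriv_boundary (a := 0) (b := T)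
    (f := fun s => √(q s + ε ^ 2)) (f' := fun s => q' s / (2 * √(q s + ε ^ 2)))
    (B := fun s => K s + ε) (B' := h)
    ((hqc.add continuousOn_const).sqrt)
    (fun s hs => ((hq' s hs).add_const _).sqrt (hpos s ⟨hs.1, hs.2.le⟩).ne')
    (by simp [hq0, hK0, Real.sqrt_sq hε.le])
    (hKc.add continuousOn_const)
    (fun s hs => (hK' s hs).add_const _)
    (fun s hs => by
      have hp := hpos s ⟨hs.1, hs.2.le⟩
      have h2 : √(q s) ≤ √(q s + ε ^ 2) := Real.sqrt_le_sqrt (by nlinarith)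
      have h3 := Real.sqrt_pos.mpr hp
      rw [div_le_iff₀ (by positivity)]
      nlinarith [hle s hs, hh s hs, mul_le_mul_of_nonneg_left h2 (hh s hs)])
    hτ
  refine le_trans (Real.sqrt_le_sqrt ?_) key
  nlinarith

/-- Grönwall's inequality for right derivatives, with a time-dependent rate `C v`. -/
lemma gronwall_right {E E' V v : ℝ → ℝ} {C T : ℝ}
    (hEc : ContinuousOn E (Set.Icc 0 T))
    (hE' : ∀ τ ∈ Set.Ico 0 T, HasDerivWithinAt E (E' τ) (Set.Ici τ) τ)
    (hV0 : V 0 = 0) (hVc : ContinuousOn V (Set.Icc 0 T))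
    (hV' : ∀ τ ∈ Set.Ico 0 T, HasDerivWithinAt V (v τ) (Set.Ici τ) τ)
    (hle : ∀ τ ∈ Set.Ico 0 T, E' τ ≤ C * v τ * E τ) :
    ∀ τ ∈ Set.Icc 0 T, E τ ≤ E 0 * Real.exp (C * V τ) := by
  intro τ hτ
  have key := image_le_of_deriv_right_le_deriv_boundary (a := 0) (b := T)
    (f := fun s => E s * Real.exp (-(C * V s)))
    (f' := fun s => E' s * Real.exp (-(C * V s)) +
      E s * (Real.exp (-(C * V s)) * (-(C * v s))))
    (B := fun _ => E 0) (B' := fun _ => 0)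
    (hEc.mul ((continuousOn_const.mul hVc).neg.rexp))
    (fun s hs => (hE' s hs).mul (((hV' s hs).const_mul C).neg.exp))
    (by simp [hV0]) continuousOn_const
    (fun s _ => hasDerivWithinAt_const _ _ _)
    (fun s hs => by
      have := hle s hs
      have h2 := Real.exp_pos (-(C * V s))
      nlinarith [mul_le_mul_of_nonneg_right this h2.le])
    hτ
  rwa [Real.exp_neg, ← div_eq_mul_inv, div_le_iff₀ (Real.exp_pos _)] at key

/-! ### The modulus of a solution of a scalar equation -/

/-- A primitive `f` satisfies `f² = f₀² + ∫ 2 f f'`: `f²` is absolutely continuous. -/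
lemma sq_primitive {g f : ℝ → ℝ} {T f₀ : ℝ} (hg : IntervalIntegrable g volume 0 T)
    (hf : ∀ s ∈ Set.Icc 0 T, f s = f₀ + ∫ x in (0 : ℝ)..s, g x) :
    ∀ s ∈ Set.Icc 0 T, f s ^ 2 = f₀ ^ 2 + ∫ x in (0 : ℝ)..s, 2 * (f x * g x) := by
  intro s hs
  have hgs : IntervalIntegrable g volume 0 s := hg.mono_set (by
    rw [Set.uIcc_of_le hs.1, Set.uIcc_of_le (hs.1.trans hs.2)]
    exact Set.Icc_subset_Icc_right hs.2)
  set F : ℝ → ℝ := fun s => f₀ + ∫ x in (0 : ℝ)..s, g x with hF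
  have hac0 : AbsolutelyContinuousOnInterval (fun s => ∫ x in (0 : ℝ)..s, g x) 0 s :=
    hgs.absolutelyContinuousOnInterval_intervalIntegral (by simp)
  have hcst : AbsolutelyContinuousOnInterval (fun _ : ℝ => f₀) 0 s :=
    (contDiff_const (n := 1)).contDiffOn.absolutelyContinuousOnInterval
  have hac : AbsolutelyContinuousOnInterval F 0 s := hcst.add hac0
  have h1 := (hac.mul hac).integral_deriv_eq_sub
  have h2 : ∫ x in (0 : ℝ)..s, deriv (F * F) x = ∫ x in (0 : ℝ)..s, 2 * (f x * g x) := by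
    apply intervalIntegral.integral_congr_ae
    filter_upwards [hgs.ae_hasDerivAt_integral] with x hx hx3
    have hx4 : x ∈ Set.uIcc 0 s := Set.uIoc_subset_uIcc hx3
    have hd : HasDerivAt F (g x) x := (hx hx4 0 (by simp)).const_add f₀
    have := (hd.mul hd).deriv
    rw [this]
    have hx5 : x ∈ Set.Icc 0 T := by
      rw [Set.uIcc_of_le hs.1] at hx4
      exact ⟨hx4.1, hx4.2.trans hs.2⟩
    have : f x = F x := hf x hx5
    rw [this]; ring
  rw [← h2, h1, hf s hs]
  simp [hF]; ring

/-- Along `z' = -iλχz + uh` with real `λ`, `χ`, the squared modulus has right derivative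
`2u Re(z̄h)`: the diagonal term drops out, whatever the function `χ` is. -/
lemma normSq_deriv {z g h : ℝ → ℂ} {χ u : ℝ → ℝ} {z₀ : ℂ} {l T : ℝ} (hT : 0 ≤ T)
    (hg : IntervalIntegrable g volume 0 T)
    (hz : ∀ s ∈ Set.Icc 0 T, z s = z₀ + ∫ x in (0 : ℝ)..s, g x)
    (hgz : ∀ s ∈ Set.Icc 0 T, g s = -(Complex.I * (l : ℂ)) * (χ s : ℂ) * z s + (u s : ℂ) * h s)
    (hh : ContinuousOn h (Set.Icc 0 T))
    (hu : ∀ s ∈ Set.Ico 0 T, ContinuousWithinAt u (Set.Ici s) s)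
    (hui : IntervalIntegrable u volume 0 T) :
    ContinuousOn z (Set.Icc 0 T) ∧
    ∀ s ∈ Set.Ico 0 T, HasDerivWithinAt (fun x => ‖z x‖ ^ 2)
      (2 * u s * ((starRingEnd ℂ) (z s) * h s).re) (Set.Ici s) s := by
  have hzc : ContinuousOn z (Set.Icc 0 T) :=
    (continuousOn_const.add (continuousOn_integral_Icc hT hg)).congr hz
  refine ⟨hzc, ?_⟩
  have hre : IntervalIntegrable (fun x => (g x).re) volume 0 T :=
    ⟨hg.1.re, hg.2.re⟩
  have him : IntervalIntegrable (fun x => (g x).im) volume 0 T :=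
    ⟨hg.1.im, hg.2.im⟩
  have hsub : ∀ s ∈ Set.Icc 0 T, IntervalIntegrable g volume 0 s := fun s hs =>
    hg.mono_set (by
      rw [Set.uIcc_of_le hs.1, Set.uIcc_of_le (hs.1.trans hs.2)]
      exact Set.Icc_subset_Icc_right hs.2)
  have hzre : ∀ s ∈ Set.Icc 0 T, (z s).re = z₀.re + ∫ x in (0 : ℝ)..s, (g x).re := by
    intro s hs
    rw [hz s hs, Complex.add_re]
    congr 1
    exact (Complex.reCLM.intervalIntegral_comp_comm (hsub s hs)).symm
  have hzim : ∀ s ∈ Set.Icc 0 T, (z s).im = z₀.im + ∫ x in (0 : ℝ)..s, (g x).im := by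
    intro s hs
    rw [hz s hs, Complex.add_im]
    congr 1
    exact (Complex.imCLM.intervalIntegral_comp_comm (hsub s hs)).symm
  have hsr := sq_primitive hre hzre
  have hsi := sq_primitive him hzim
  set k : ℝ → ℝ := fun s => u s * (2 * ((starRingEnd ℂ) (z s) * h s).re) with hk
  have hcont : ContinuousOn (fun s => 2 * ((starRingEnd ℂ) (z s) * h s).re) (Set.Icc 0 T) := by
    refine continuousOn_const.mul (Complex.continuous_re.comp_continuousOn ?_)
    exact (Complex.continuous_conj.comp_continuousOn hzc).mul hh
  have hki : IntervalIntegrable k volume 0 T := by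
    refine hui.mul_continuousOn ?_
    rwa [Set.uIcc_of_le hT]
  have hzk : ∀ s ∈ Set.Icc 0 T, ‖z s‖ ^ 2 = ‖z₀‖ ^ 2 + ∫ x in (0 : ℝ)..s, k x := by
    intro s hs
    have e1 : ∀ w : ℂ, ‖w‖ ^ 2 = w.re ^ 2 + w.im ^ 2 := fun w => by
      rw [← Complex.normSq_eq_norm_sq, Complex.normSq_apply]; ring
    have hcs : ContinuousOn z (Set.uIcc 0 s) := by
      rw [Set.uIcc_of_le hs.1]; exact hzc.mono (Set.Icc_subset_Icc_right hs.2)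
    have hzr : ContinuousOn (fun x => (z x).re) (Set.uIcc 0 s) :=
      Complex.continuous_re.comp_continuousOn hcs
    have hzi : ContinuousOn (fun x => (z x).im) (Set.uIcc 0 s) :=
      Complex.continuous_im.comp_continuousOn hcs
    have hrs : IntervalIntegrable (fun x => (g x).re) volume 0 s :=
      ⟨(hsub s hs).1.re, (hsub s hs).2.re⟩
    have his : IntervalIntegrable (fun x => (g x).im) volume 0 s :=
      ⟨(hsub s hs).1.im, (hsub s hs).2.im⟩
    rw [e1, e1, hsr s hs, hsi s hs]
    have : ∫ x in (0 : ℝ)..s, k x = (∫ x in (0 : ℝ)..s, 2 * ((z x).re * (g x).re)) +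
        ∫ x in (0 : ℝ)..s, 2 * ((z x).im * (g x).im) := by
      rw [← intervalIntegral.integral_add ((hrs.continuousOn_mul hzr).const_mul 2)
        ((his.continuousOn_mul hzi).const_mul 2)]
      apply intervalIntegral.integral_congr
      intro x hx
      rw [Set.uIcc_of_le hs.1] at hx
      have := hgz x ⟨hx.1, hx.2.trans hs.2⟩
      simp only [hk, this]
      simp [Complex.mul_re, Complex.mul_im]
      ring
    rw [this]; ring
  intro s hs
  have hkc : ContinuousWithinAt k (Set.Ici s) s := by
    have h1 : ContinuousWithinAt (fun s => 2 * ((starRingEnd ℂ) (z s) * h s).re)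
        (Set.Ici s) s := by
      refine (hcont s ⟨hs.1, hs.2.le⟩).mono_of_mem_nhdsWithin ?_
      exact mem_of_superset (Ico_mem_nhdsGE hs.2)
        (fun x hx => ⟨hs.1.trans hx.1, hx.2.le⟩)
    exact (hu s hs).mul h1
  have hd := (hasDerivWithinAt_Ici_integral hki hs hkc).const_add (‖z₀‖ ^ 2)
  have hd2 : HasDerivWithinAt (fun x => ‖z x‖ ^ 2) (k s) (Set.Ici s) s := by
    refine hd.congr_of_eventuallyEq ?_ (hzk s ⟨hs.1, hs.2.le⟩)
    filter_upwards [Ico_mem_nhdsGE hs.2] with x hx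
    exact hzk x ⟨hs.1.trans hx.1, hx.2.le⟩
  convert hd2 using 1
  simp only [hk]; ring

/-! ### Tridiagonal actions on sequences -/

/-- The tridiagonal matrix `b` applied to the sequence `y`. -/
def triAct (b : ℕ → ℕ → ℂ) (y : ℕ → ℂ) (j : ℕ) : ℂ :=
  (if j = 0 then 0 else b j (j - 1) * y (j - 1)) + b j j * y j + b j (j + 1) * y (j + 1)

/-- The flux `Re(ȳ_j b_{j,j+1} y_{j+1})` of squared modulus between the levels `j` and `j + 1`. -/
def flux (b : ℕ → ℕ → ℂ) (y : ℕ → ℂ) (j : ℕ) : ℝ :=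
  ((starRingEnd ℂ) (y j) * (b j (j + 1) * y (j + 1))).re

lemma abs_flux_le (b : ℕ → ℕ → ℂ) (y : ℕ → ℂ) (j : ℕ) :
    |flux b y j| ≤ ‖b j (j + 1)‖ * ‖y j‖ * ‖y (j + 1)‖ := by
  refine (Complex.abs_re_le_norm _).trans (le_of_eq ?_)
  simp; ring

lemma re_diag_eq_zero {b : ℕ → ℕ → ℂ} (hskew : ∀ j m : ℕ, b m j = -(starRingEnd ℂ) (b j m))
    (j : ℕ) : (b j j).re = 0 := by
  have := congrArg Complex.re (hskew j j)
  simp at this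
  linarith

lemma re_conj_mul_triAct_zero {b : ℕ → ℕ → ℂ}
    (hskew : ∀ j m : ℕ, b m j = -(starRingEnd ℂ) (b j m)) (y : ℕ → ℂ) :
    ((starRingEnd ℂ) (y 0) * triAct b y 0).re = flux b y 0 := by
  have h := re_diag_eq_zero hskew 0
  simp [triAct, flux, Complex.mul_re, Complex.mul_im, h]
  ring

lemma re_conj_mul_triAct_succ {b : ℕ → ℕ → ℂ}
    (hskew : ∀ j m : ℕ, b m j = -(starRingEnd ℂ) (b j m)) (y : ℕ → ℂ) (j : ℕ) :
    ((starRingEnd ℂ) (y (j + 1)) * triAct b y (j + 1)).re = flux b y (j + 1) - flux b y j := by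
  have h := re_diag_eq_zero hskew (j + 1)
  have h2 := hskew j (j + 1)
  simp [triAct, flux, Complex.mul_re, Complex.mul_im, h, h2]
  ring

/-- Summation by parts: by skew-symmetry only fluxes survive. -/
lemma sum_weight_re_triAct {b : ℕ → ℕ → ℂ}
    (hskew : ∀ j m : ℕ, b m j = -(starRingEnd ℂ) (b j m)) (y : ℕ → ℂ) (v : ℕ → ℝ) (m : ℕ) :
    ∑ j ∈ Finset.range (m + 1), v j * ((starRingEnd ℂ) (y j) * triAct b y j).re =
      (∑ j ∈ Finset.range m, (v j - v (j + 1)) * flux b y j) + v m * flux b y m := by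
  induction m with
  | zero => rw [zero_add, Finset.sum_range_one, re_conj_mul_triAct_zero hskew]; simp
  | succ m ih =>
    rw [Finset.sum_range_succ, ih, re_conj_mul_triAct_succ hskew, Finset.sum_range_succ]
    ring

lemma sum_weight_deriv {b : ℕ → ℕ → ℂ}
    (hskew : ∀ j m : ℕ, b m j = -(starRingEnd ℂ) (b j m)) {u : ℝ → ℝ} {T : ℝ}
    {x : ℝ → ℕ → ℂ} (m : ℕ) (v : ℕ → ℝ)
    (hd : ∀ j ≤ m, ∀ s ∈ Set.Ico 0 T, HasDerivWithinAt (fun s => ‖x s j‖ ^ 2)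
      (2 * u s * ((starRingEnd ℂ) (x s j) * triAct b (x s) j).re) (Set.Ici s) s) :
    ∀ s ∈ Set.Ico 0 T,
      HasDerivWithinAt (fun s => ∑ j ∈ Finset.range (m + 1), v j * ‖x s j‖ ^ 2)
      (2 * u s * ((∑ j ∈ Finset.range m, (v j - v (j + 1)) * flux b (x s) j) +
        v m * flux b (x s) m)) (Set.Ici s) s := by
  intro s hs
  have := HasDerivWithinAt.fun_sum (u := Finset.range (m + 1))
    (A := fun j s => v j * ‖x s j‖ ^ 2) (x := s) (s := Set.Ici s)
    (fun j hj => (hd j (Nat.lt_succ_iff.mp (Finset.mem_range.mp hj)) s hs).const_mul (v j))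
  refine this.congr_deriv ?_
  rw [← sum_weight_re_triAct hskew, Finset.mul_sum]
  exact Finset.sum_congr rfl fun j _ => by ring

lemma sum_weight_continuousOn {T : ℝ} {x : ℝ → ℕ → ℂ} (m : ℕ) (v : ℕ → ℝ)
    (hc : ∀ j, ContinuousOn (fun s => x s j) (Set.Icc 0 T)) :
    ContinuousOn (fun s => ∑ j ∈ Finset.range m, v j * ‖x s j‖ ^ 2) (Set.Icc 0 T) :=
  continuousOn_finsetSum _ fun j _ => continuousOn_const.mul ((hc j).norm.pow 2)

/-! ### A priori estimates for solutions starting at a basis vector -/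

lemma abs_control_deriv {u : ℝ → ℝ} {T : ℝ}
    (hu : ∀ s ∈ Set.Ico 0 T, ContinuousWithinAt u (Set.Ici s) s)
    (hui : IntervalIntegrable u volume 0 T) :
    ∀ s ∈ Set.Ico 0 T, HasDerivWithinAt (fun s => ∫ x in (0 : ℝ)..s, |u x|) |u s|
      (Set.Ici s) s := fun s hs =>
  hasDerivWithinAt_Ici_integral hui.abs hs (hu s hs).abs

lemma pow_primitive_deriv {V : ℝ → ℝ} {v s D : ℝ} {S : Set ℝ} (i : ℕ)
    (h : HasDerivWithinAt V v S s) :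
    HasDerivWithinAt (fun s => D * (V s ^ (i + 1) / (i + 1).factorial))
      (D * (V s ^ i / i.factorial) * v) S s := by
  have := ((h.pow (i + 1)).div_const ((i + 1).factorial : ℝ)).const_mul D
  refine this.congr_deriv ?_
  have h1 : (i.factorial : ℝ) ≠ 0 := by positivity
  rw [Nat.factorial_succ]
  push_cast
  have h2 : (i : ℝ) + 1 ≠ 0 := by positivity
  field_simp

/-- Growth bound for `∑ λ_j²|x_j|²`, the squared graph norm of `A`. The truncated weights
`w_j = min(λ_j², R)` are nondecreasing and eventually equal to `R`, so that, the total mass being at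
most `1`, `∑ w_j|x_j|²` is dominated by `R - ∑ (R - w_j)|x_j|²`, which involves a finite sum only.
The derivative of the latter is controlled by `|b_{j,j+1}|(w_{j+1} - w_j) ≤ C w_j`, uniformly in
`R`, and Grönwall's inequality applies. -/
lemma weighted_energy {lam : ℕ → ℝ} (hpos : ∀ n, 0 < lam n) (hmono : Monotone lam)
    {b : ℕ → ℕ → ℂ}
    (hskew : ∀ j m : ℕ, b m j = -(starRingEnd ℂ) (b j m)) {C : ℝ} (hC : 0 ≤ C)
    (hb : ∀ j, ‖b j (j + 1)‖ * (lam (j + 1) ^ 2 - lam j ^ 2) ≤ C * lam j ^ 2)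
    {u : ℝ → ℝ} {T : ℝ} (hT : 0 ≤ T)
    (hu : ∀ s ∈ Set.Ico 0 T, ContinuousWithinAt u (Set.Ici s) s)
    (hui : IntervalIntegrable u volume 0 T)
    {x : ℝ → ℕ → ℂ} {n : ℕ}
    (hc : ∀ j, ContinuousOn (fun s => x s j) (Set.Icc 0 T))
    (hd : ∀ j, ∀ s ∈ Set.Ico 0 T, HasDerivWithinAt (fun s => ‖x s j‖ ^ 2)
      (2 * u s * ((starRingEnd ℂ) (x s j) * triAct b (x s) j).re) (Set.Ici s) s)
    (hone : ∀ s ∈ Set.Icc 0 T, ∀ m, ∑ j ∈ Finset.range m, ‖x s j‖ ^ 2 ≤ 1)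
    (hinit : ∀ j, x 0 j = if j = n then 1 else 0) :
    ∀ s ∈ Set.Icc 0 T, ∀ m, ∑ j ∈ Finset.range m, lam j ^ 2 * ‖x s j‖ ^ 2 ≤
      lam n ^ 2 * Real.exp (2 * C * ∫ x in (0 : ℝ)..s, |u x|) := by
  intro s hs m
  set R : ℝ := lam (max m n) ^ 2 with hR
  set w : ℕ → ℝ := fun j => min (lam j ^ 2) R with hw
  have hsq : Monotone fun j => lam j ^ 2 := fun i j hij =>
    pow_le_pow_left₀ (hpos i).le (hmono hij) 2
  -- beyond `J` the truncated weight equals `R`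
  set J : ℕ := max m n with hJ
  have hwJ : ∀ j, J ≤ j → w j = R := fun j hj => min_eq_right (hsq hj)
  have hwm : ∀ j, j ≤ J → w j = lam j ^ 2 := fun j hj => min_eq_left (hsq hj)
  have hw0 : ∀ j, 0 ≤ w j := fun j => le_min (sq_nonneg _) (sq_nonneg _)
  have hwmono : ∀ j, w j ≤ w (j + 1) := fun j => min_le_min (hsq (Nat.le_succ j)) le_rfl
  have hwb : ∀ j, ‖b j (j + 1)‖ * (w (j + 1) - w j) ≤ C * w j := by
    intro j
    by_cases hj : J ≤ j
    · rw [hwJ j hj, hwJ (j + 1) (by omega)]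
      simpa using mul_nonneg hC (sq_nonneg _)
    · rw [hwm j (by omega), hwm (j + 1) (by omega)]
      exact hb j
  set E : ℝ → ℝ := fun s => R - ∑ j ∈ Finset.range (J + 1), (R - w j) * ‖x s j‖ ^ 2 with hE
  have hEge : ∀ s ∈ Set.Icc 0 T, ∑ j ∈ Finset.range (J + 1), w j * ‖x s j‖ ^ 2 ≤ E s := by
    intro s hs
    have h1 := mul_le_mul_of_nonneg_left (hone s hs (J + 1)) (sq_nonneg (lam (max m n)))
    simp only [hE, sub_mul, Finset.sum_sub_distrib, ← Finset.mul_sum]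
    rw [← hR] at h1
    linarith
  have hderiv := sum_weight_deriv hskew (u := u) J (fun j => R - w j) (fun j _ => hd j)
  have hgr := gronwall_right (E := E) (C := 2 * C) (V := fun s => ∫ x in (0 : ℝ)..s, |u x|)
    (v := fun s => |u s|) (T := T)
    (continuousOn_const.sub (sum_weight_continuousOn _ _ hc))
    (fun s hs => (hderiv s hs).const_sub R)
    (by simp) (continuousOn_integral_Icc hT hui.abs) (abs_control_deriv hu hui)
    (by
      intro s hs
      have hs' : s ∈ Set.Icc 0 T := ⟨hs.1, hs.2.le⟩
      rw [hwJ J le_rfl, sub_self, zero_mul, add_zero]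
      set Q := ∑ j ∈ Finset.range J, (R - w j - (R - w (j + 1))) * flux b (x s) j with hQ
      have hQle : |Q| ≤ C * E s := by
        have hterm : ∀ j ∈ Finset.range J, |(R - w j - (R - w (j + 1))) * flux b (x s) j| ≤
            C * ((w j * ‖x s j‖ ^ 2 + w (j + 1) * ‖x s (j + 1)‖ ^ 2) / 2) := by
          intro j _
          have h1 := abs_flux_le b (x s) j
          have h2 : R - w j - (R - w (j + 1)) = w (j + 1) - w j := by ring
          have h3 : 0 ≤ w (j + 1) - w j := sub_nonneg.mpr (hwmono j)
          rw [h2, abs_mul, abs_of_nonneg h3]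
          calc (w (j + 1) - w j) * |flux b (x s) j|
              ≤ (w (j + 1) - w j) * (‖b j (j + 1)‖ * ‖x s j‖ * ‖x s (j + 1)‖) := by gcongr
            _ = (‖b j (j + 1)‖ * (w (j + 1) - w j)) * (‖x s j‖ * ‖x s (j + 1)‖) := by ring
            _ ≤ (C * w j) * (‖x s j‖ * ‖x s (j + 1)‖) :=
                mul_le_mul_of_nonneg_right (hwb j) (by positivity)
            _ = C * (w j * (‖x s j‖ * ‖x s (j + 1)‖)) := by ring
            _ ≤ C * (w j * ((‖x s j‖ ^ 2 + ‖x s (j + 1)‖ ^ 2) / 2)) := by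
                have := hw0 j
                gcongr
                nlinarith [sq_nonneg (‖x s j‖ - ‖x s (j + 1)‖)]
            _ ≤ _ := by
                gcongr
                nlinarith [mul_le_mul_of_nonneg_right (hwmono j) (sq_nonneg ‖x s (j + 1)‖)]
        refine (Finset.abs_sum_le_sum_abs _ _).trans ((Finset.sum_le_sum hterm).trans ?_)
        rw [← Finset.mul_sum]
        refine mul_le_mul_of_nonneg_left ?_ hC
        rw [← Finset.sum_div, Finset.sum_add_distrib]
        have h4 := hEge s hs'
        have h5 := h4
        rw [Finset.sum_range_succ] at h4
        rw [Finset.sum_range_succ'] at h5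
        have h6 : 0 ≤ w J * ‖x s J‖ ^ 2 := mul_nonneg (hw0 _) (sq_nonneg _)
        have h7 : 0 ≤ w 0 * ‖x s 0‖ ^ 2 := mul_nonneg (hw0 _) (sq_nonneg _)
        linarith
      have h8 : -(2 * u s * Q) ≤ 2 * (|u s| * |Q|) := by
        have := neg_abs_le (u s * Q)
        rw [abs_mul] at this
        linarith
      nlinarith [mul_le_mul_of_nonneg_left hQle (abs_nonneg (u s))])
    s hs
  have hE0 : E 0 = lam n ^ 2 := by
    have : ∑ j ∈ Finset.range (J + 1), (R - w j) * ‖x 0 j‖ ^ 2 = R - w n := by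
      rw [Finset.sum_eq_single n]
      · simp [hinit]
      · intro j _ hj; simp [hinit, hj]
      · intro h; exfalso; apply h; simp [hJ]
    simp only [hE, this]
    rw [hwm n (le_max_right _ _)]; ring
  rw [hE0] at hgr
  refine le_trans ?_ ((hEge s hs).trans hgr)
  calc ∑ j ∈ Finset.range m, lam j ^ 2 * ‖x s j‖ ^ 2
      = ∑ j ∈ Finset.range m, w j * ‖x s j‖ ^ 2 := by
        refine Finset.sum_congr rfl fun j hj => ?_
        rw [hwm j]
        have := Finset.mem_range.mp hj
        have := le_max_left m n
        omega
    _ ≤ _ := by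
        refine Finset.sum_le_sum_of_subset_of_nonneg ?_ fun j _ _ =>
          mul_nonneg (hw0 _) (sq_nonneg _)
        have := le_max_left m n
        exact Finset.range_mono (by omega)

/-- The mass beyond level `n + i` is fed only through the entry `b_{n+i,n+i+1}` and the coordinate at
level `n + i`, which is itself part of the mass beyond level `n + i - 1`. By induction its square
root is of order `i` in `∫|u|`. -/
lemma tail_mass {b : ℕ → ℕ → ℂ}
    (hskew : ∀ j m : ℕ, b m j = -(starRingEnd ℂ) (b j m))
    {L : ℕ → ℝ} (hL : ∀ j p q : ℕ, p ≤ j → q ≤ j → ‖b p q‖ ≤ L j)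
    {u : ℝ → ℝ} {T : ℝ} (hT : 0 ≤ T)
    (hu : ∀ s ∈ Set.Ico 0 T, ContinuousWithinAt u (Set.Ici s) s)
    (hui : IntervalIntegrable u volume 0 T)
    {x : ℝ → ℕ → ℂ} {n N : ℕ}
    (hc : ∀ j, ContinuousOn (fun s => x s j) (Set.Icc 0 T))
    (hd : ∀ j, ∀ s ∈ Set.Ico 0 T, HasDerivWithinAt (fun s => ‖x s j‖ ^ 2)
      (2 * u s * ((starRingEnd ℂ) (x s j) * triAct b (x s) j).re) (Set.Ici s) s)
    (hone : ∀ s ∈ Set.Icc 0 T, ∀ m, ∑ j ∈ Finset.range m, ‖x s j‖ ^ 2 ≤ 1)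
    (hinit : ∀ j, x 0 j = if j = n then 1 else 0) (i : ℕ)
    (hi : i ≤ N - n) :
    ∀ s ∈ Set.Icc 0 T, √(1 - ∑ j ∈ Finset.range (n + i + 1), ‖x s j‖ ^ 2) ≤
      (∏ j ∈ Finset.range i, L (N + 1 + j)) *
        ((∫ x in (0 : ℝ)..s, |u x|) ^ i / i.factorial) := by
  have hL0 : ∀ j, 0 ≤ L j := fun j => (norm_nonneg _).trans (hL j j j le_rfl le_rfl)
  have hV0 : ∀ s ∈ Set.Icc 0 T, 0 ≤ ∫ x in (0 : ℝ)..s, |u x| := fun s hs =>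
    intervalIntegral.integral_nonneg hs.1 fun _ _ => abs_nonneg _
  induction i with
  | zero =>
    intro s hs
    simp only [Finset.range_zero, Finset.prod_empty, pow_zero, Nat.factorial_zero, Nat.cast_one,
      div_one, mul_one]
    refine Real.sqrt_le_one.mpr ?_
    have : 0 ≤ ∑ j ∈ Finset.range (n + 0 + 1), ‖x s j‖ ^ 2 :=
      Finset.sum_nonneg fun _ _ => sq_nonneg _
    linarith
  | succ i ih =>
    set D := ∏ j ∈ Finset.range (i + 1), L (N + 1 + j) with hD
    set D' := ∏ j ∈ Finset.range i, L (N + 1 + j) with hD'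
    have hDD : D = D' * L (N + 1 + i) := Finset.prod_range_succ _ _
    have hD0 : 0 ≤ D := Finset.prod_nonneg fun _ _ => hL0 _
    have hD0' : 0 ≤ D' := Finset.prod_nonneg fun _ _ => hL0 _
    have hder := sum_weight_deriv hskew (u := u) (n + i + 1) (fun _ => (1 : ℝ)) (fun j _ => hd j)
    simp only [one_mul, sub_self, zero_mul, Finset.sum_const_zero, zero_add] at hder
    have hcc := sum_weight_continuousOn (n + i + 1 + 1) (fun _ => (1 : ℝ)) hc
    simp only [one_mul] at hcc
    refine sqrt_le_of_deriv_le (T := T)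
      (q := fun s => 1 - ∑ j ∈ Finset.range (n + i + 1 + 1), ‖x s j‖ ^ 2)
      (q' := fun s => -(2 * u s * flux b (x s) (n + i + 1)))
      (h := fun s => D * ((∫ x in (0 : ℝ)..s, |u x|) ^ i / i.factorial) * |u s|)
      ?_ (fun s hs => sub_nonneg.mpr (hone s hs _)) (continuousOn_const.sub hcc)
      (fun s hs => (hder s hs).const_sub 1) (by simp)
      (continuousOn_const.mul (((continuousOn_integral_Icc hT hui.abs).pow _).div_const _))
      (fun s hs => pow_primitive_deriv i (abs_control_deriv hu hui s hs)) ?_ ?_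
    · rw [Finset.sum_eq_single n]
      · simp [hinit]
      · intro j _ hj; simp [hinit, hj]
      · intro h; exfalso; apply h; simp; omega
    · intro s hs
      have := hV0 s ⟨hs.1, hs.2.le⟩
      positivity
    · intro s hs
      have hs' : s ∈ Set.Icc 0 T := ⟨hs.1, hs.2.le⟩
      have hx : ∀ m, ‖x s m‖ ≤ √(1 - ∑ j ∈ Finset.range m, ‖x s j‖ ^ 2) := fun m => by
        refine Real.le_sqrt_of_sq_le ?_
        have := hone s hs' (m + 1)
        rw [Finset.sum_range_succ] at this
        linarith
      have hx1 : ‖x s (n + i + 1 + 1)‖ ≤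
          √(1 - ∑ j ∈ Finset.range (n + i + 1 + 1), ‖x s j‖ ^ 2) := hx _
      have hx2 := (hx (n + i + 1)).trans (ih (by omega) s hs')
      have hbL : ‖b (n + i + 1) (n + i + 1 + 1)‖ ≤ L (N + 1 + i) :=
        hL _ _ _ (by omega) (by omega)
      have hV := hV0 s hs'
      have hfl : |flux b (x s) (n + i + 1)| ≤
          D * ((∫ x in (0 : ℝ)..s, |u x|) ^ i / i.factorial) *
            √(1 - ∑ j ∈ Finset.range (n + i + 1 + 1), ‖x s j‖ ^ 2) := by
        refine (abs_flux_le _ _ _).trans ?_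
        have h3 := hL0 (N + 1 + i)
        calc _ ≤ L (N + 1 + i) * (D' * ((∫ x in (0 : ℝ)..s, |u x|) ^ i / i.factorial)) *
              √(1 - ∑ j ∈ Finset.range (n + i + 1 + 1), ‖x s j‖ ^ 2) := by gcongr
          _ = _ := by rw [hDD]; ring
      have h8 : -(2 * u s * flux b (x s) (n + i + 1)) ≤
          2 * (|u s| * |flux b (x s) (n + i + 1)|) := by
        have := neg_abs_le (u s * flux b (x s) (n + i + 1))
        rw [abs_mul] at this
        linarith
      have := mul_le_mul_of_nonneg_left hfl (abs_nonneg (u s))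
      linarith

/-! ### Coordinates in the Hilbert basis -/

section Coordinates

variable {H : Type*} [NormedAddCommGroup H] [InnerProductSpace ℂ H]
  (φ : HilbertBasis ℕ ℂ H)

lemma repr_basis (n j : ℕ) : φ.repr (φ n) j = if j = n then 1 else 0 := by
  rw [φ.repr_apply_apply]
  exact orthonormal_iff_ite.mp φ.orthonormal j n

lemma repr_of_hasSum {c : ℕ → ℂ} {v : H} (h : HasSum (fun j => c j • φ j) v) (j : ℕ) :
    φ.repr v j = c j := by
  rw [φ.repr_apply_apply]
  have h1 := (innerSL ℂ (φ j)).hasSum h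
  have h2 : HasSum (fun i => (innerSL ℂ (φ j)) (c i • φ i)) (c j) := by
    have := hasSum_single (f := fun i => (innerSL ℂ (φ j)) (c i • φ i)) j (fun i hi => by
      simp [orthonormal_iff_ite.mp φ.orthonormal j i, hi.symm])
    simpa [orthonormal_iff_ite.mp φ.orthonormal j j, φ.orthonormal.1 j] using this
  exact h1.unique h2

lemma hasSum_norm_sq_repr (v : H) : HasSum (fun j => ‖φ.repr v j‖ ^ 2) (‖v‖ ^ 2) := by
  have := lp.hasSum_norm (p := 2) (by norm_num) (φ.repr v)
  simpa using this

lemma sum_norm_sq_repr_le (v : H) (m : ℕ) :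
    ∑ j ∈ Finset.range m, ‖φ.repr v j‖ ^ 2 ≤ ‖v‖ ^ 2 :=
  sum_le_hasSum _ (fun _ _ => sq_nonneg _) (hasSum_norm_sq_repr φ v)

lemma norm_repr_le (v : H) (j : ℕ) : ‖φ.repr v j‖ ≤ ‖v‖ := by
  have := le_hasSum (hasSum_norm_sq_repr φ v) j (fun _ _ => sq_nonneg _)
  exact le_of_sq_le_sq this (norm_nonneg _)

lemma exists_hasSum_of_summable_sq {c : ℕ → ℂ} (hc : Summable fun j => ‖c j‖ ^ 2) :
    HasSum (fun j => c j • φ j) (∑' j, c j • φ j) ∧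
      ‖∑' j, c j • φ j‖ ^ 2 = ∑' j, ‖c j‖ ^ 2 := by
  have hm : Memℓp c 2 := memℓp_gen (by simpa using hc)
  have h1 := φ.hasSum_repr_symm ⟨c, hm⟩
  have h2 : HasSum (fun j => c j • φ j) (∑' j, c j • φ j) := h1.summable.hasSum
  refine ⟨h2, ?_⟩
  rw [← (hasSum_norm_sq_repr φ _).tsum_eq]
  simp_rw [repr_of_hasSum φ h2]

lemma repr_real_smul (r : ℝ) (v : H) (j : ℕ) : φ.repr (r • v) j = (r : ℂ) * φ.repr v j := by
  rw [← Complex.coe_smul, map_smul]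
  rfl

lemma repr_integral [CompleteSpace H] {G : ℝ → H} {τ : ℝ}
    (hG : IntervalIntegrable G volume 0 τ) (j : ℕ) :
    φ.repr (∫ x in (0 : ℝ)..τ, G x) j = ∫ x in (0 : ℝ)..τ, φ.repr (G x) j := by
  simp_rw [φ.repr_apply_apply]
  exact ((innerSL ℂ (φ j)).intervalIntegral_comp_comm hG).symm

lemma intervalIntegrable_repr {G : ℝ → H} {a τ : ℝ}
    (hG : IntervalIntegrable G volume a τ) (j : ℕ) :
    IntervalIntegrable (fun x => φ.repr (G x) j) volume a τ := by
  simp_rw [φ.repr_apply_apply]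
  exact ⟨(innerSL ℂ (φ j)).integrable_comp hG.1, (innerSL ℂ (φ j)).integrable_comp hG.2⟩

lemma continuousOn_repr {y : ℝ → H} {S : Set ℝ} (hy : ContinuousOn y S) (j : ℕ) :
    ContinuousOn (fun s => φ.repr (y s) j) S := by
  simp_rw [φ.repr_apply_apply]
  exact (innerSL ℂ (φ j)).continuous.comp_continuousOn hy

lemma norm_le_sum_of_mem {N : ℕ} {v : H} (hv : v ∈ galerkinSpace φ N) :
    ‖v‖ ≤ ∑ j ∈ Finset.range (N + 1), ‖φ.repr v j‖ := by
  have h1 := φ.hasSum_repr v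
  have h2 : v = ∑ j ∈ Finset.range (N + 1), φ.repr v j • φ j := by
    refine h1.unique (hasSum_sum_of_ne_finset_zero fun j hj => ?_)
    rw [hv j (by simpa using hj), zero_smul]
  calc ‖v‖ = ‖∑ j ∈ Finset.range (N + 1), φ.repr v j • φ j‖ := by rw [← h2]
    _ ≤ ∑ j ∈ Finset.range (N + 1), ‖φ.repr v j • φ j‖ := norm_sum_le _ _
    _ = _ := Finset.sum_congr rfl fun j _ => by
      rw [norm_smul, φ.orthonormal.1 j, mul_one]

variable [CompleteSpace H]

/-- The coordinates of `Aψ`. The factor `c` is `1` on the domain of `A`; outside of it the sum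
defining `Aψ` does not converge, so that `Aop φ lam ψ = 0` and `c = 0`. -/
lemma Aop_repr_exists (lam : ℕ → ℝ) (ψ : H) :
    ∃ c : ℝ, ∀ j, φ.repr (Aop φ lam ψ) j = -(Complex.I * (lam j : ℂ)) * (c : ℂ) * φ.repr ψ j := by
  by_cases h : Summable fun n => (-(Complex.I * (lam n : ℂ))) • (φ.repr ψ n • φ n)
  · refine ⟨1, fun j => ?_⟩
    have h1 := h.hasSum
    simp_rw [smul_smul] at h1
    rw [Aop]
    simp_rw [smul_smul]
    rw [repr_of_hasSum φ h1]
    simp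
  · refine ⟨0, fun j => ?_⟩
    rw [Aop, tsum_eq_zero_of_not_summable h]
    simp

lemma Aop_repr {lam : ℕ → ℝ} {ψ : H} (h : Summable fun j => lam j ^ 2 * ‖φ.repr ψ j‖ ^ 2) :
    (∀ j, φ.repr (Aop φ lam ψ) j = -(Complex.I * (lam j : ℂ)) * φ.repr ψ j) ∧
      ‖Aop φ lam ψ‖ ^ 2 = ∑' j, lam j ^ 2 * ‖φ.repr ψ j‖ ^ 2 := by
  have e : ∀ j, ‖-(Complex.I * (lam j : ℂ)) * φ.repr ψ j‖ ^ 2 = lam j ^ 2 * ‖φ.repr ψ j‖ ^ 2 :=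
    fun j => by simp [mul_pow]
  obtain ⟨h1, h2⟩ := exists_hasSum_of_summable_sq φ
    (c := fun j => -(Complex.I * (lam j : ℂ)) * φ.repr ψ j) (by simp_rw [e]; exact h)
  simp_rw [e] at h2
  have h3 : Aop φ lam ψ = ∑' j, (-(Complex.I * (lam j : ℂ)) * φ.repr ψ j) • φ j := by
    simp [Aop, smul_smul]
  rw [h3]
  exact ⟨repr_of_hasSum φ h1, h2⟩

lemma BopTri_repr {b : ℕ → ℕ → ℂ} {ψ : H}
    (h : Summable fun j => ‖triAct b (fun i => φ.repr ψ i) j‖ ^ 2) :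
    (∀ j, φ.repr (BopTri φ b ψ) j = triAct b (fun i => φ.repr ψ i) j) ∧
      ‖BopTri φ b ψ‖ ^ 2 = ∑' j, ‖triAct b (fun i => φ.repr ψ i) j‖ ^ 2 := by
  obtain ⟨h1, h2⟩ := exists_hasSum_of_summable_sq φ h
  exact ⟨repr_of_hasSum φ h1, h2⟩

lemma projN_repr (N : ℕ) (ψ : H) (j : ℕ) :
    φ.repr (projN φ N ψ) j = if j ≤ N then φ.repr ψ j else 0 := by
  have h0 : (fun n => if n ≤ N then φ.repr ψ n • φ n else 0) =
      fun n => (if n ≤ N then φ.repr ψ n else 0) • φ n := by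
    funext n; split_ifs <;> simp
  have hs : Summable fun n => (if n ≤ N then φ.repr ψ n else 0) • φ n :=
    summable_of_hasFiniteSupport ((Set.finite_Iic N).subset fun n hn => by
      by_contra h
      simp only [Set.mem_Iic] at h
      simp [h] at hn)
  rw [projN, h0]
  exact repr_of_hasSum φ hs.hasSum j

lemma projN_eq_self {N : ℕ} {v : H} (hv : v ∈ galerkinSpace φ N) : projN φ N v = v := by
  apply φ.repr.injective
  ext j
  rw [projN_repr]
  split_ifs with h
  · rfl
  · exact (hv j (not_le.mp h)).symm

/-- The coordinates of `A^{(N)}v + r B^{(N)}v` for `v ∈ L_N`; all sums are finite. -/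
lemma galerkin_repr (lam : ℕ → ℝ) (b : ℕ → ℕ → ℂ) {N : ℕ} {v : H} (hv : v ∈ galerkinSpace φ N)
    (r : ℝ) (j : ℕ) :
    φ.repr (projN φ N (Aop φ lam (projN φ N v)) + r • projN φ N (BopTri φ b (projN φ N v))) j =
      if j ≤ N then -(Complex.I * (lam j : ℂ)) * φ.repr v j +
        (r : ℂ) * triAct b (fun i => φ.repr v i) j else 0 := by
  rw [projN_eq_self φ hv, map_add, lp.coeFn_add, Pi.add_apply, repr_real_smul, projN_repr,
    projN_repr]
  have hA : Summable fun j => lam j ^ 2 * ‖φ.repr v j‖ ^ 2 :=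
    summable_of_hasFiniteSupport ((Set.finite_Iic N).subset fun n hn => by
      by_contra h
      simp only [Set.mem_Iic, not_le] at h
      simp [hv n h] at hn)
  have hB : Summable fun j => ‖triAct b (fun i => φ.repr v i) j‖ ^ 2 :=
    summable_of_hasFiniteSupport ((Set.finite_Iic (N + 1)).subset fun n hn => by
      by_contra h
      simp only [Set.mem_Iic, not_le] at h
      have h0 : n ≠ 0 := by omega
      simp [triAct, h0, hv n (by omega), hv (n - 1) (by omega), hv (n + 1) (by omega)] at hn)
  split_ifs with h
  · rw [(Aop_repr φ hA).1, (BopTri_repr φ hB).1]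
  · simp

end Coordinates

/-! ### The coupling operator on `D(|A|^{k/2})` -/

lemma triAct_summable {lam : ℕ → ℝ} (hpos : ∀ n, 0 < lam n) {b : ℕ → ℕ → ℂ} {k : ℕ} {K : ℝ}
    (hK : 0 ≤ K) (h0 : ∀ n, ‖b n n‖ ^ 2 ≤ K * lam n ^ k)
    (h1 : ∀ n, ‖b (n + 1) n‖ ^ 2 ≤ K * lam n ^ k)
    (h2 : ∀ n, ‖b n (n + 1)‖ ^ 2 ≤ K * lam (n + 1) ^ k) {y : ℕ → ℂ}
    (hy : Summable fun n => lam n ^ k * ‖y n‖ ^ 2) :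
    (Summable fun n => ‖triAct b y n‖ ^ 2) ∧
      ∑' n, ‖triAct b y n‖ ^ 2 ≤ 9 * K * ∑' n, lam n ^ k * ‖y n‖ ^ 2 := by
  set a : ℕ → ℝ := fun n => lam n ^ k * ‖y n‖ ^ 2 with ha
  have ha0 : ∀ n, 0 ≤ a n := fun n => mul_nonneg (pow_nonneg (hpos n).le _) (sq_nonneg _)
  set a' : ℕ → ℝ := fun n => if n = 0 then 0 else a (n - 1) with ha'
  have hs' : HasSum a' (∑' n, a n) := by
    have : HasSum (fun n => a' (n + 1)) (∑' n, a n) := by simpa [ha'] using hy.hasSum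
    have := (hasSum_nat_add_iff 1).mp this
    simpa [ha'] using this
  have hs2 : Summable fun n => a (n + 1) := (summable_nat_add_iff 1).mpr hy
  have hs2le : ∑' n, a (n + 1) ≤ ∑' n, a n := by
    have := hy.tsum_eq_zero_add
    have := ha0 0
    linarith
  have hle : ∀ n, ‖triAct b y n‖ ^ 2 ≤ 3 * K * (a' n + a n + a (n + 1)) := by
    intro n
    set p := ‖(if n = 0 then 0 else b n (n - 1) * y (n - 1))‖
    set q := ‖b n n * y n‖
    set s := ‖b n (n + 1) * y (n + 1)‖
    have e1 : ‖triAct b y n‖ ≤ p + q + s := norm_add₃_le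
    have ep : p ^ 2 ≤ K * a' n := by
      rcases n with _ | n
      · simp [p, ha']
      · have := mul_le_mul_of_nonneg_right (h1 n) (sq_nonneg ‖y n‖)
        simp only [p, ha', ha, Nat.add_eq_zero_iff, one_ne_zero, and_false, if_false,
          Nat.add_sub_cancel, norm_mul, mul_pow]
        linarith
    have eq : q ^ 2 ≤ K * a n := by
      have := mul_le_mul_of_nonneg_right (h0 n) (sq_nonneg ‖y n‖)
      simp only [q, ha, norm_mul, mul_pow]
      linarith
    have es : s ^ 2 ≤ K * a (n + 1) := by
      have := mul_le_mul_of_nonneg_right (h2 n) (sq_nonneg ‖y (n + 1)‖)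
      simp only [s, ha, norm_mul, mul_pow]
      linarith
    have e2 : ‖triAct b y n‖ ^ 2 ≤ (p + q + s) ^ 2 := pow_le_pow_left₀ (norm_nonneg _) e1 2
    nlinarith [sq_nonneg (p - q), sq_nonneg (q - s), sq_nonneg (p - s)]
  have hsum : Summable fun n => 3 * K * (a' n + a n + a (n + 1)) :=
    ((hs'.summable.add hy).add hs2).mul_left _
  have hS : Summable fun n => ‖triAct b y n‖ ^ 2 :=
    Summable.of_nonneg_of_le (fun _ => sq_nonneg _) hle hsum
  refine ⟨hS, (hS.tsum_le_tsum hle hsum).trans ?_⟩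
  rw [tsum_mul_left, (hs'.summable.add hy).tsum_add hs2, hs'.summable.tsum_add hy, hs'.tsum_eq]
  nlinarith [mul_le_mul_of_nonneg_left hs2le hK]

lemma exists_coupling_bound {lam : ℕ → ℝ} (hpos : ∀ n, 0 < lam n) (hmono : Monotone lam)
    {b : ℕ → ℕ → ℂ} (hskew : ∀ j m : ℕ, b m j = -(starRingEnd ℂ) (b j m))
    (hratio : ∃ M : ℝ, ∀ n, lam (n + 1) / lam n ≤ M)
    {k : ℕ} {r : ℝ} (hrk : r < (k : ℝ) / 2)
    (hbd2 : ∃ M₂ : ℝ, ∀ n, ‖b n n‖ / lam n ^ r ≤ M₂)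
    (hbd3 : ∃ M₃ : ℝ, ∀ n, ‖b (n + 1) n‖ / lam (n + 1) ^ r ≤ M₃) :
    ∃ K : ℝ, 0 ≤ K ∧ (∀ n, ‖b n n‖ ^ 2 ≤ K * lam n ^ k) ∧
      (∀ n, ‖b (n + 1) n‖ ^ 2 ≤ K * lam n ^ k) ∧
      (∀ n, ‖b n (n + 1)‖ ^ 2 ≤ K * lam (n + 1) ^ k) := by
  obtain ⟨M, hM⟩ := hratio
  obtain ⟨M₂, hM₂⟩ := hbd2
  obtain ⟨M₃, hM₃⟩ := hbd3
  have hM1 : 1 ≤ M := le_trans ((one_le_div (hpos 0)).mpr (hmono (Nat.le_succ 0))) (hM 0)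
  set c := lam 0 ^ (2 * r - k) with hc
  have hc0 : 0 < c := Real.rpow_pos_of_pos (hpos 0) _
  -- `λ^{2r} ≤ λ₀^{2r-k} λ^k`, because `2r < k` and `λ₀ ≤ λ`
  have hpow : ∀ n, (lam n ^ r) ^ 2 ≤ c * lam n ^ k := by
    intro n
    have h1 : lam n ^ (2 * r - k) ≤ c :=
      Real.rpow_le_rpow_of_nonpos (hpos 0) (hmono (Nat.zero_le n)) (by linarith)
    have h2 : (lam n ^ r) ^ 2 = lam n ^ (2 * r - k) * lam n ^ k := by
      rw [← Real.rpow_natCast (lam n) k, ← Real.rpow_add (hpos n), ← Real.rpow_natCast,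
        ← Real.rpow_mul (hpos n).le]
      congr 1; push_cast; ring
    rw [h2]
    exact mul_le_mul_of_nonneg_right h1 (pow_nonneg (hpos n).le _)
  have hgen : ∀ {β M' : ℝ} {n : ℕ}, 0 ≤ β → β / lam n ^ r ≤ M' →
      β ^ 2 ≤ M' ^ 2 * c * lam n ^ k := by
    intro β M' n hβ h
    have hp := Real.rpow_pos_of_pos (hpos n) r
    rw [div_le_iff₀ hp] at h
    calc β ^ 2 ≤ (M' * lam n ^ r) ^ 2 := pow_le_pow_left₀ hβ h 2
      _ = M' ^ 2 * (lam n ^ r) ^ 2 := by ring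
      _ ≤ M' ^ 2 * (c * lam n ^ k) := mul_le_mul_of_nonneg_left (hpow n) (sq_nonneg _)
      _ = _ := by ring
  have hMk : 1 ≤ M ^ k := one_le_pow₀ hM1
  have hA : 0 ≤ M₂ ^ 2 * c := by positivity
  have hB : 0 ≤ M₃ ^ 2 * c := by positivity
  have hB2 : M₃ ^ 2 * c ≤ M₃ ^ 2 * c * M ^ k := le_mul_of_one_le_right hB hMk
  refine ⟨M₂ ^ 2 * c + M₃ ^ 2 * c * M ^ k, by positivity, fun n => ?_, fun n => ?_, fun n => ?_⟩
  · have hl := pow_pos (hpos n) k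
    refine (hgen (norm_nonneg _) (hM₂ n)).trans (mul_le_mul_of_nonneg_right ?_ hl.le)
    linarith
  · have hl := pow_pos (hpos n) k
    refine (hgen (norm_nonneg _) (hM₃ n)).trans ?_
    have h3 : lam (n + 1) ^ k ≤ M ^ k * lam n ^ k := by
      rw [← mul_pow]
      exact pow_le_pow_left₀ (hpos _).le ((div_le_iff₀ (hpos n)).mp (hM n)) k
    calc M₃ ^ 2 * c * lam (n + 1) ^ k ≤ M₃ ^ 2 * c * (M ^ k * lam n ^ k) :=
          mul_le_mul_of_nonneg_left h3 hB
      _ ≤ _ := by nlinarith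
  · have hl := pow_pos (hpos (n + 1)) k
    have e : ‖b n (n + 1)‖ = ‖b (n + 1) n‖ := by
      rw [hskew (n + 1) n, norm_neg, RCLike.norm_conj]
    rw [e]
    refine (hgen (norm_nonneg _) (hM₃ n)).trans (mul_le_mul_of_nonneg_right ?_ hl.le)
    linarith

/-- The commutator condition for the exponent `k` implies the one for the exponent `2`, thanks to
the bound on the ratios `λ_{n+1}/λ_n`. -/
lemma exists_commutator_bound {lam : ℕ → ℝ} (hpos : ∀ n, 0 < lam n) (hmono : Monotone lam)
    {b : ℕ → ℕ → ℂ} (hratio : ∃ M : ℝ, ∀ n, lam (n + 1) / lam n ≤ M)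
    {k : ℕ} (hk : 0 < k)
    (hbd1 : ∃ M₁ : ℝ, ∀ n, ‖b n (n + 1)‖ * (lam (n + 1) ^ k / lam n ^ k - 1) ≤ M₁) :
    ∃ C : ℝ, 0 ≤ C ∧ ∀ j, ‖b j (j + 1)‖ * (lam (j + 1) ^ 2 - lam j ^ 2) ≤ C * lam j ^ 2 := by
  obtain ⟨M, hM⟩ := hratio
  obtain ⟨M₁, hM₁⟩ := hbd1
  have hone : ∀ n, 1 ≤ lam (n + 1) / lam n := fun n =>
    (one_le_div (hpos n)).mpr (hmono (Nat.le_succ n))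
  have hM1 : 1 ≤ M := (hone 0).trans (hM 0)
  have key : ∀ n, ‖b n (n + 1)‖ * (lam (n + 1) / lam n - 1) ≤ M₁ := fun n => by
    refine le_trans ?_ (hM₁ n)
    rw [← div_pow]
    exact mul_le_mul_of_nonneg_left (sub_le_sub_right (le_self_pow₀ (hone n) hk.ne') 1)
      (norm_nonneg _)
  have hM₁0 : 0 ≤ M₁ :=
    (mul_nonneg (norm_nonneg _) (sub_nonneg.mpr (hone 0))).trans (key 0)
  refine ⟨M₁ * (M + 1), by positivity, fun j => ?_⟩
  set ρ := lam (j + 1) / lam j with hρ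
  have e : lam (j + 1) = ρ * lam j := by rw [hρ, div_mul_cancel₀ _ (hpos j).ne']
  have h1 := key j
  have h2 : (‖b j (j + 1)‖ * (ρ - 1)) * (ρ + 1) ≤ M₁ * (M + 1) :=
    mul_le_mul h1 (by linarith [hM j]) (by linarith [hone j]) hM₁0
  calc ‖b j (j + 1)‖ * (lam (j + 1) ^ 2 - lam j ^ 2)
      = (‖b j (j + 1)‖ * (ρ - 1)) * (ρ + 1) * lam j ^ 2 := by rw [e]; ring
    _ ≤ _ := mul_le_mul_of_nonneg_right h2 (sq_nonneg _)

lemma weight_rpow {lam : ℕ → ℝ} (k n : ℕ) : lam n ^ (2 * ((k : ℝ) / 2)) = lam n ^ k := by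
  rw [mul_div_cancel₀ _ (two_ne_zero), Real.rpow_natCast]

/-! ### Integrability of the right-hand side -/

/-- Let `y τ = y₀ + ∫₀^τ G`, where the integral is `0` by convention if `G` is not integrable on
`[0, τ]`. If `G` is bounded as long as it is integrable and is known where `y = y₀`, then it is
integrable on all of `[0, t]`: past the supremum of the integrability times `y` would be frozen at
`y₀`. -/
lemma intervalIntegrable_of_integral_eq {E : Type*} [NormedAddCommGroup E] [NormedSpace ℝ E]
    {y G G₀ : ℝ → E} {y₀ : E} {t K : ℝ} (ht : 0 ≤ t)
    (hy : ∀ τ ∈ Set.Icc 0 t, y τ = y₀ + ∫ x in (0 : ℝ)..τ, G x)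
    (hG₀ : IntervalIntegrable G₀ volume 0 t) (hconst : ∀ τ, y τ = y₀ → G τ = G₀ τ)
    (hbd : ∀ τ ∈ Set.Ico 0 t, IntervalIntegrable G volume 0 τ → ∀ σ ∈ Set.Icc 0 τ, ‖G σ‖ ≤ K) :
    IntervalIntegrable G volume 0 t := by
  set S : Set ℝ := {τ | τ ∈ Set.Icc 0 t ∧ IntervalIntegrable G volume 0 τ} with hS
  have h0S : (0 : ℝ) ∈ S := ⟨⟨le_rfl, ht⟩, IntervalIntegrable.refl⟩
  have hbdd : BddAbove S := ⟨t, fun τ hτ => hτ.1.2⟩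
  set τs := sSup S with hτs
  have hs0 : 0 ≤ τs := le_csSup hbdd h0S
  have hst : τs ≤ t := csSup_le ⟨0, h0S⟩ fun τ hτ => hτ.1.2
  have hbelow : ∀ τ, 0 ≤ τ → τ < τs → IntervalIntegrable G volume 0 τ := by
    intro τ h0 hτ
    obtain ⟨σ, hσ, hlt⟩ := exists_lt_of_lt_csSup ⟨0, h0S⟩ hτ
    refine hσ.2.mono_set ?_
    rw [Set.uIcc_of_le h0, Set.uIcc_of_le hσ.1.1]
    exact Set.Icc_subset_Icc_right hlt.le
  have hint1 : IntervalIntegrable G volume 0 τs := by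
    rcases hs0.eq_or_lt with h | h
    · rw [← h]
    · rw [intervalIntegrable_iff_integrableOn_Ioo_of_le hs0]
      obtain ⟨a, -, ha, hlim⟩ := exists_seq_strictMono_tendsto' h
      have hcov : Set.Ioo 0 τs ⊆ ⋃ i, Set.Ioc 0 (a i) := by
        intro σ hσ
        obtain ⟨i, hi⟩ := (hlim.eventually (lt_mem_nhds hσ.2)).exists
        exact Set.mem_iUnion.mpr ⟨i, hσ.1, hi.le⟩
      have hm : AEStronglyMeasurable G (volume.restrict (Set.Ioo 0 τs)) := by
        refine AEStronglyMeasurable.mono_set hcov ?_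
        rw [aestronglyMeasurable_iUnion_iff]
        intro i
        have := hbelow (a i) (ha i).1.le (ha i).2
        exact ((intervalIntegrable_iff_integrableOn_Ioc_of_le (ha i).1.le).mp
          this).aestronglyMeasurable
      refine Integrable.of_bound hm K ?_
      filter_upwards [ae_restrict_mem measurableSet_Ioo] with σ hσ
      exact hbd σ ⟨hσ.1.le, hσ.2.trans_le hst⟩ (hbelow σ hσ.1.le hσ.2) σ ⟨hσ.1.le, le_rfl⟩
  have hint2 : IntervalIntegrable G volume τs t := by
    rw [intervalIntegrable_iff_integrableOn_Ioc_of_le hst]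
    have h1 := (intervalIntegrable_iff_integrableOn_Ioc_of_le ht).mp hG₀
    refine (h1.mono_set (Set.Ioc_subset_Ioc_left hs0)).congr_fun (fun σ hσ => ?_)
      measurableSet_Ioc
    have hσ' : σ ∈ Set.Icc 0 t := ⟨hs0.trans hσ.1.le, hσ.2⟩
    have hn : ¬ IntervalIntegrable G volume 0 σ := fun h =>
      absurd (le_csSup hbdd (show σ ∈ S from ⟨hσ', h⟩)) (not_le.mpr hσ.1)
    refine (hconst σ ?_).symm
    rw [hy σ hσ', intervalIntegral.integral_undef hn, add_zero]
  exact hint1.trans hint2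

/-! ### Trajectories and their coordinates -/

lemma continuousOn_triAct {b : ℕ → ℕ → ℂ} {x : ℝ → ℕ → ℂ} {S : Set ℝ}
    (hc : ∀ j, ContinuousOn (fun s => x s j) S) (j : ℕ) :
    ContinuousOn (fun s => triAct b (x s) j) S := by
  unfold triAct
  refine ContinuousOn.add (ContinuousOn.add ?_ ?_) ?_
  · split_ifs
    · exact continuousOn_const
    · exact continuousOn_const.mul (hc _)
  · exact continuousOn_const.mul (hc _)
  · exact continuousOn_const.mul (hc _)

section Trajectories

variable {H : Type*} [NormedAddCommGroup H] [InnerProductSpace ℂ H]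
  (φ : HilbertBasis ℕ ℂ H)

lemma repr_primitive [CompleteSpace H] {y G : ℝ → H} {y₀ : H} {T : ℝ}
    (hG : IntervalIntegrable G volume 0 T)
    (hy : ∀ s ∈ Set.Icc 0 T, y s = y₀ + ∫ σ in (0 : ℝ)..s, G σ) (j : ℕ) :
    ∀ s ∈ Set.Icc 0 T, φ.repr (y s) j = φ.repr y₀ j + ∫ σ in (0 : ℝ)..s, φ.repr (G σ) j := by
  intro s hs
  have hGs : IntervalIntegrable G volume 0 s := hG.mono_set (by
    rw [Set.uIcc_of_le hs.1, Set.uIcc_of_le (hs.1.trans hs.2)]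
    exact Set.Icc_subset_Icc_right hs.2)
  rw [hy s hs, map_add, lp.coeFn_add, Pi.add_apply, repr_integral φ hGs]

lemma coord_equations [CompleteSpace H] {lam : ℕ → ℝ} {b : ℕ → ℕ → ℂ} {u : ℝ → ℝ} {T : ℝ}
    (hT : 0 ≤ T)
    (hu : ∀ s ∈ Set.Ico 0 T, ContinuousWithinAt u (Set.Ici s) s)
    (hui : IntervalIntegrable u volume 0 T) {y G : ℝ → H} {y₀ : H}
    (hG : IntervalIntegrable G volume 0 T)
    (hy : ∀ s ∈ Set.Icc 0 T, y s = y₀ + ∫ σ in (0 : ℝ)..s, G σ)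
    (hGc : ∀ s ∈ Set.Icc 0 T, ∃ c : ℝ, ∀ j, φ.repr (G s) j =
      -(Complex.I * (lam j : ℂ)) * (c : ℂ) * φ.repr (y s) j +
        (u s : ℂ) * triAct b (fun i => φ.repr (y s) i) j) :
    (∀ j, ContinuousOn (fun s => φ.repr (y s) j) (Set.Icc 0 T)) ∧
      ∀ j, ∀ s ∈ Set.Ico 0 T, HasDerivWithinAt (fun s => ‖φ.repr (y s) j‖ ^ 2)
        (2 * u s * ((starRingEnd ℂ) (φ.repr (y s) j) *
          triAct b (fun i => φ.repr (y s) i) j).re) (Set.Ici s) s := by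
  have hyc : ContinuousOn y (Set.Icc 0 T) :=
    (continuousOn_const.add (continuousOn_integral_Icc hT hG)).congr hy
  have hc := continuousOn_repr φ hyc
  refine ⟨hc, fun j => ?_⟩
  choose! χ hχ using hGc
  exact (normSq_deriv (χ := χ) (l := lam j) hT (intervalIntegrable_repr φ hG j)
    (repr_primitive φ hG hy j) (fun s hs => hχ s hs j) (continuousOn_triAct hc j) hu hui).2

/-- Along a unit trajectory starting at `φ n` whose right-hand side is integrable, the sum defining
`Aψ` converges, with a norm bound depending only on the control. -/
lemma trajectory_energy [CompleteSpace H] {lam : ℕ → ℝ} (hpos : ∀ n, 0 < lam n)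
    (hmono : Monotone lam) {b : ℕ → ℕ → ℂ}
    (hskew : ∀ j m : ℕ, b m j = -(starRingEnd ℂ) (b j m)) {C : ℝ} (hC : 0 ≤ C)
    (hb : ∀ j, ‖b j (j + 1)‖ * (lam (j + 1) ^ 2 - lam j ^ 2) ≤ C * lam j ^ 2)
    {u : ℝ → ℝ} {T : ℝ} (hT : 0 ≤ T)
    (hu : ∀ s ∈ Set.Ico 0 T, ContinuousWithinAt u (Set.Ici s) s)
    (hui : IntervalIntegrable u volume 0 T) {y : ℝ → H} {n : ℕ}
    (hG : IntervalIntegrable (fun σ => Aop φ lam (y σ) + u σ • BopTri φ b (y σ)) volume 0 T)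
    (hy : ∀ s ∈ Set.Icc 0 T, y s = φ n + ∫ σ in (0 : ℝ)..s,
      (Aop φ lam (y σ) + u σ • BopTri φ b (y σ)))
    (hy1 : ∀ s, ‖y s‖ = 1)
    (hB : ∀ s ∈ Set.Icc 0 T, Summable fun j => ‖triAct b (fun i => φ.repr (y s) i) j‖ ^ 2) :
    ((∀ j, ContinuousOn (fun s => φ.repr (y s) j) (Set.Icc 0 T)) ∧
      ∀ j, ∀ s ∈ Set.Ico 0 T, HasDerivWithinAt (fun s => ‖φ.repr (y s) j‖ ^ 2)
        (2 * u s * ((starRingEnd ℂ) (φ.repr (y s) j) *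
          triAct b (fun i => φ.repr (y s) i) j).re) (Set.Ici s) s) ∧
    ∀ s ∈ Set.Icc 0 T, (Summable fun j => lam j ^ 2 * ‖φ.repr (y s) j‖ ^ 2) ∧
      ‖Aop φ lam (y s)‖ ^ 2 ≤ lam n ^ 2 * Real.exp (2 * C * ∫ x in (0 : ℝ)..s, |u x|) := by
  have hce := coord_equations φ (lam := lam) (b := b) hT hu hui hG hy (fun s hs => by
    obtain ⟨c, hc⟩ := Aop_repr_exists φ lam (y s)
    refine ⟨c, fun j => ?_⟩
    rw [map_add, lp.coeFn_add, Pi.add_apply, repr_real_smul, hc j, (BopTri_repr φ (hB s hs)).1])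
  refine ⟨hce, fun s hs => ?_⟩
  have hw := weighted_energy hpos hmono hskew hC hb hT hu hui
    (x := fun s j => φ.repr (y s) j) (n := n) hce.1 hce.2
    (fun s _ m => by simpa [hy1 s] using sum_norm_sq_repr_le φ (y s) m)
    (fun j => by
      have : y 0 = φ n := by simpa using hy 0 ⟨le_rfl, hT⟩
      simp only [this]
      exact repr_basis φ n j) s hs
  have hs1 : Summable fun j => lam j ^ 2 * ‖φ.repr (y s) j‖ ^ 2 :=
    summable_of_sum_range_le (fun j => by positivity) hw
  refine ⟨hs1, ?_⟩
  rw [(Aop_repr φ hs1).2]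
  exact Real.tsum_le_of_sum_range_le (fun j => by positivity) hw

/-- The right-hand side of the equation is integrable along a unit trajectory starting at `φ n`
along which `B` is bounded. -/
lemma trajectory_integrable [CompleteSpace H] {lam : ℕ → ℝ} (hpos : ∀ n, 0 < lam n)
    (hmono : Monotone lam) {b : ℕ → ℕ → ℂ}
    (hskew : ∀ j m : ℕ, b m j = -(starRingEnd ℂ) (b j m)) {C : ℝ} (hC : 0 ≤ C)
    (hb : ∀ j, ‖b j (j + 1)‖ * (lam (j + 1) ^ 2 - lam j ^ 2) ≤ C * lam j ^ 2)
    {u : ℝ → ℝ} {t Ku : ℝ} (ht : 0 ≤ t) (hKu : ∀ τ ∈ Set.Ico 0 t, |u τ| ≤ Ku)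
    (hu : ∀ s ∈ Set.Ico 0 t, ContinuousWithinAt u (Set.Ici s) s)
    (hui : IntervalIntegrable u volume 0 t) {y : ℝ → H} {n : ℕ}
    (hy : ∀ s ∈ Set.Icc 0 t, y s = φ n + ∫ σ in (0 : ℝ)..s,
      (Aop φ lam (y σ) + u σ • BopTri φ b (y σ)))
    (hy1 : ∀ s, ‖y s‖ = 1) {P : ℝ}
    (hB : ∀ s ∈ Set.Icc 0 t, (Summable fun j => ‖triAct b (fun i => φ.repr (y s) i) j‖ ^ 2) ∧
      ∑' j, ‖triAct b (fun i => φ.repr (y s) i) j‖ ^ 2 ≤ P) :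
    IntervalIntegrable (fun σ => Aop φ lam (y σ) + u σ • BopTri φ b (y σ)) volume 0 t := by
  have hV : ∀ s ∈ Set.Icc 0 t, ∫ x in (0 : ℝ)..s, |u x| ≤ ∫ x in (0 : ℝ)..t, |u x| :=
    fun s hs => intervalIntegral.integral_mono_interval le_rfl hs.1 hs.2
      (Filter.Eventually.of_forall fun _ => abs_nonneg _) hui.abs
  refine intervalIntegrable_of_integral_eq (y₀ := φ n) (y := y)
    (G₀ := fun σ => Aop φ lam (φ n) + u σ • BopTri φ b (φ n))
    (K := √(lam n ^ 2 * Real.exp (2 * C * ∫ x in (0 : ℝ)..t, |u x|)) + Ku * √P)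
    ht hy ?_ (fun τ hτ => by simp only [hτ]) ?_
  · exact intervalIntegrable_const.add ⟨hui.1.smul_const _, hui.2.smul_const _⟩
  · intro τ hτ hint σ hσ
    have hsub : Set.Icc 0 τ ⊆ Set.Icc 0 t := Set.Icc_subset_Icc_right hτ.2.le
    have hsub' : Set.Ico 0 τ ⊆ Set.Ico 0 t := Set.Ico_subset_Ico_right hτ.2.le
    have huτ : IntervalIntegrable u volume 0 τ := hui.mono_set (by
      rw [Set.uIcc_of_le hτ.1, Set.uIcc_of_le ht]; exact hsub)
    have h1 := ((trajectory_energy φ hpos hmono hskew hC hb hτ.1 (fun s hs => hu s (hsub' hs)) huτ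
      hint (fun s hs => hy s (hsub hs)) hy1 (fun s hs => (hB s (hsub hs)).1)).2 σ hσ).2
    have hA : ‖Aop φ lam (y σ)‖ ≤ √(lam n ^ 2 * Real.exp (2 * C * ∫ x in (0 : ℝ)..t, |u x|)) := by
      refine Real.le_sqrt_of_sq_le (h1.trans ?_)
      have := hV σ (hsub hσ)
      gcongr
    have hB' : ‖BopTri φ b (y σ)‖ ≤ √P := by
      refine Real.le_sqrt_of_sq_le ?_
      rw [(BopTri_repr φ (hB σ (hsub hσ)).1).2]
      exact (hB σ (hsub hσ)).2
    refine (norm_add_le _ _).trans (add_le_add hA ?_)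
    rw [norm_smul, Real.norm_eq_abs]
    exact mul_le_mul (hKu σ ⟨hσ.1, hσ.2.trans_lt hτ.2⟩) hB' (norm_nonneg _)
      ((abs_nonneg _).trans (hKu σ ⟨hσ.1, hσ.2.trans_lt hτ.2⟩))

lemma galerkin_integrable [CompleteSpace H] {lam : ℕ → ℝ} {b : ℕ → ℕ → ℂ}
    {u : ℝ → ℝ} {t Ku : ℝ} (ht : 0 ≤ t) (hKu : ∀ τ ∈ Set.Ico 0 t, |u τ| ≤ Ku)
    (hui : IntervalIntegrable u volume 0 t) {x : ℝ → H} {x₀ : H} {N : ℕ}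
    (hx : ∀ s ∈ Set.Icc 0 t, x s = x₀ + ∫ σ in (0 : ℝ)..s,
      (projN φ N (Aop φ lam (projN φ N (x σ))) + u σ • projN φ N (BopTri φ b (projN φ N (x σ)))))
    (hx1 : ∀ s, ‖x s‖ = 1) (hxm : ∀ s, x s ∈ galerkinSpace φ N) :
    IntervalIntegrable (fun σ => projN φ N (Aop φ lam (projN φ N (x σ))) +
      u σ • projN φ N (BopTri φ b (projN φ N (x σ)))) volume 0 t := by
  refine intervalIntegrable_of_integral_eq (y₀ := x₀) (y := x)
    (G₀ := fun σ => projN φ N (Aop φ lam (projN φ N x₀)) +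
      u σ • projN φ N (BopTri φ b (projN φ N x₀)))
    (K := ∑ j ∈ Finset.range (N + 1), (|lam j| + Ku * (‖b j (j - 1)‖ + ‖b j j‖ + ‖b j (j + 1)‖)))
    ht hx ?_ (fun τ hτ => by simp only [hτ]) ?_
  · exact intervalIntegrable_const.add ⟨hui.1.smul_const _, hui.2.smul_const _⟩
  · intro τ hτ _ σ hσ
    refine (norm_le_sum_of_mem φ (N := N) fun j hj => ?_).trans (Finset.sum_le_sum fun j hj => ?_)
    · rw [galerkin_repr φ lam b (hxm σ), if_neg (not_le.mpr hj)]
    · rw [galerkin_repr φ lam b (hxm σ),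
        if_pos (Nat.lt_succ_iff.mp (Finset.mem_range.mp hj))]
      have hr : ∀ i, ‖φ.repr (x σ) i‖ ≤ 1 := fun i => (norm_repr_le φ _ i).trans (hx1 σ).le
      have huσ := hKu σ ⟨hσ.1, hσ.2.trans_lt hτ.2⟩
      have hm : ∀ β i, ‖β * φ.repr (x σ) i‖ ≤ ‖β‖ := fun β i => by
        rw [norm_mul]; exact mul_le_of_le_one_right (norm_nonneg _) (hr i)
      have ht3 : ‖triAct b (fun i => φ.repr (x σ) i) j‖ ≤
          ‖b j (j - 1)‖ + ‖b j j‖ + ‖b j (j + 1)‖ := by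
        refine norm_add₃_le.trans (add_le_add (add_le_add ?_ (hm _ _)) (hm _ _))
        split_ifs
        · simp
        · exact hm _ _
      refine (norm_add_le _ _).trans (add_le_add ((hm _ _).trans (by simp)) ?_)
      rw [norm_mul, Complex.norm_real, Real.norm_eq_abs]
      exact mul_le_mul huσ ht3 (norm_nonneg _) ((abs_nonneg _).trans huσ)

end Trajectories

/-- Let `w` solve the tridiagonal system up to level `N` with zero initial data there, as the
difference of an exact and a Galerkin solution does. Then the mass of `w` up to level `N` comes only
from what the entry `b_{N,N+1}` feeds back from `w_{N+1}`. -/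
lemma difference_bound {lam : ℕ → ℝ} {b : ℕ → ℕ → ℂ}
    (hskew : ∀ j m : ℕ, b m j = -(starRingEnd ℂ) (b j m)) {u : ℝ → ℝ} {T : ℝ} (hT : 0 ≤ T)
    (hu : ∀ s ∈ Set.Ico 0 T, ContinuousWithinAt u (Set.Ici s) s)
    (hui : IntervalIntegrable u volume 0 T)
    {w g : ℝ → ℕ → ℂ} {N i : ℕ} {ℓ D : ℝ} (hD : 0 ≤ D)
    (hℓ : ‖b N (N + 1)‖ ≤ ℓ)
    (hc : ∀ j, ContinuousOn (fun s => w s j) (Set.Icc 0 T))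
    (hgi : ∀ j ≤ N, IntervalIntegrable (fun s => g s j) volume 0 T)
    (hw : ∀ j ≤ N, ∀ s ∈ Set.Icc 0 T, w s j = 0 + ∫ σ in (0 : ℝ)..s, g σ j)
    (hg : ∀ j ≤ N, ∀ s ∈ Set.Icc 0 T, g s j =
      -(Complex.I * (lam j : ℂ)) * w s j + (u s : ℂ) * triAct b (w s) j)
    (htail : ∀ s ∈ Set.Icc 0 T, ‖w s (N + 1)‖ ≤
      D * ((∫ x in (0 : ℝ)..s, |u x|) ^ i / i.factorial)) :
    ∀ s ∈ Set.Icc 0 T, √(∑ j ∈ Finset.range (N + 1), ‖w s j‖ ^ 2) ≤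
      D * ℓ * ((∫ x in (0 : ℝ)..s, |u x|) ^ (i + 1) / (i + 1).factorial) := by
  have hℓ0 : 0 ≤ ℓ := (norm_nonneg _).trans hℓ
  have hV0 : ∀ s ∈ Set.Icc 0 T, 0 ≤ ∫ x in (0 : ℝ)..s, |u x| := fun s hs =>
    intervalIntegral.integral_nonneg hs.1 fun _ _ => abs_nonneg _
  have hd : ∀ j ≤ N, ∀ s ∈ Set.Ico 0 T, HasDerivWithinAt (fun s => ‖w s j‖ ^ 2)
      (2 * u s * ((starRingEnd ℂ) (w s j) * triAct b (w s) j).re) (Set.Ici s) s := fun j hj =>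
    (normSq_deriv (χ := fun _ => 1) (l := lam j) hT (hgi j hj) (hw j hj)
      (fun s hs => by rw [hg j hj s hs]; simp) (continuousOn_triAct hc j) hu hui).2
  have hder := sum_weight_deriv hskew (u := u) N (fun _ => (1 : ℝ)) hd
  simp only [one_mul, sub_self, zero_mul, Finset.sum_const_zero, zero_add] at hder
  have hcc := sum_weight_continuousOn (N + 1) (fun _ => (1 : ℝ)) hc
  simp only [one_mul] at hcc
  refine sqrt_le_of_deriv_le (q := fun s => ∑ j ∈ Finset.range (N + 1), ‖w s j‖ ^ 2)
    (h := fun s => D * ℓ * ((∫ x in (0 : ℝ)..s, |u x|) ^ i / i.factorial) * |u s|)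
    ?_ (fun s _ => Finset.sum_nonneg fun _ _ => sq_nonneg _) hcc hder (by simp)
    (continuousOn_const.mul (((continuousOn_integral_Icc hT hui.abs).pow _).div_const _))
    (fun s hs => pow_primitive_deriv i (abs_control_deriv hu hui s hs)) ?_ ?_
  · refine Finset.sum_eq_zero fun j hj => ?_
    rw [hw j (Nat.lt_succ_iff.mp (Finset.mem_range.mp hj)) 0 ⟨le_rfl, hT⟩]
    simp
  · intro s hs
    have := hV0 s ⟨hs.1, hs.2.le⟩
    positivity
  · intro s hs
    have hs' : s ∈ Set.Icc 0 T := ⟨hs.1, hs.2.le⟩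
    set q := ∑ j ∈ Finset.range (N + 1), ‖w s j‖ ^ 2 with hq
    have hN : ‖w s N‖ ≤ √q := Real.le_sqrt_of_sq_le
      (Finset.single_le_sum (f := fun j => ‖w s j‖ ^ 2) (fun _ _ => sq_nonneg _)
        (Finset.self_mem_range_succ N))
    have hfl : |flux b (w s) N| ≤
        D * ℓ * ((∫ x in (0 : ℝ)..s, |u x|) ^ i / i.factorial) * √q := by
      have h3 := htail s hs'
      calc _ ≤ ‖b N (N + 1)‖ * ‖w s N‖ * ‖w s (N + 1)‖ := abs_flux_le _ _ _
        _ ≤ ℓ * √q * (D * ((∫ x in (0 : ℝ)..s, |u x|) ^ i / i.factorial)) := by gcongr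
        _ = _ := by ring
    have h8 : 2 * u s * flux b (w s) N ≤ 2 * (|u s| * |flux b (w s) N|) := by
      have := le_abs_self (u s * flux b (w s) N)
      rw [abs_mul] at this
      linarith
    have := mul_le_mul_of_nonneg_left hfl (abs_nonneg (u s))
    linarith

/-! ### The error estimate -/

theorem stmt15 {H : Type*} [NormedAddCommGroup H] [InnerProductSpace ℂ H] [CompleteSpace H]
    (φ : HilbertBasis ℕ ℂ H) (lam : ℕ → ℝ)
    (hpos : ∀ n, 0 < lam n) (hmono : Monotone lam) (htop : Tendsto lam atTop atTop)
    (b : ℕ → ℕ → ℂ)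
    (htri : ∀ j m : ℕ, max j m > min j m + 1 → b j m = 0)
    (hskew : ∀ j m : ℕ, b m j = -(starRingEnd ℂ) (b j m))
    (hratio : ∃ M : ℝ, ∀ n, lam (n + 1) / lam n ≤ M)
    (hsubz : Tendsto (fun n => ‖b (n + 1) n‖ / lam (n + 1)) atTop (𝓝 0))
    (hdiagz : Tendsto (fun n => ‖b n n‖ / lam n) atTop (𝓝 0))
    (k : ℕ) (hk : 0 < k) (r : ℝ) (hr : 0 ≤ r) (hrk : r < (k : ℝ) / 2)
    (hbd1 : ∃ M₁ : ℝ, ∀ n, ‖b n (n + 1)‖ * (lam (n + 1) ^ k / lam n ^ k - 1) ≤ M₁)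
    (hbd2 : ∃ M₂ : ℝ, ∀ n, ‖b n n‖ / lam n ^ r ≤ M₂)
    (hbd3 : ∃ M₃ : ℝ, ∀ n, ‖b (n + 1) n‖ / lam (n + 1) ^ r ≤ M₃)
    (t : ℝ) (ht : 0 ≤ t)
    (u : ℝ → ℝ) (hu : PiecewiseConstant u t)
    (c : ℝ) (hc : 0 ≤ c)
    -- the propagator: unitary operators with Υ₀ = Id whose trajectories from
    -- `D(|A|^{k/2})` stay there, solve the equation (integrated form) and obey the
    -- energy estimate with coupling constant `c`
    (Υ : ℝ → (H ≃ₗᵢ[ℂ] H)) (hΥ0 : Υ 0 = LinearIsometryEquiv.refl ℂ H)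
    (htraj : ∀ ψ ∈ domAs φ lam ((k : ℝ) / 2), ∀ τ ∈ Set.Icc (0 : ℝ) t,
      Υ τ ψ ∈ domAs φ lam ((k : ℝ) / 2) ∧
        Υ τ ψ = ψ + ∫ σ in (0 : ℝ)..τ, (Aop φ lam (Υ σ ψ) + u σ • BopTri φ b (Υ σ ψ)) ∧
        sNorm φ lam ((k : ℝ) / 2) (Υ τ ψ) ≤
          Real.exp (c * ∫ σ in (0 : ℝ)..t, |u σ|) * sNorm φ lam ((k : ℝ) / 2) ψ)
    -- Galerkin propagators of every order exist
    (X : ℕ → ℝ → ℝ → H → H)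
    (hXlin : ∀ N τ σ, IsLinearMap ℂ (X N τ σ))
    (hXmem : ∀ N τ σ, ∀ x ∈ galerkinSpace φ N, X N τ σ x ∈ galerkinSpace φ N)
    (hXnorm : ∀ N τ σ, ∀ x ∈ galerkinSpace φ N, ‖X N τ σ x‖ = ‖x‖)
    (hXid : ∀ N τ, ∀ x ∈ galerkinSpace φ N, X N τ τ x = x)
    (hXcomp : ∀ N τ σ ρ, ∀ x ∈ galerkinSpace φ N, X N τ σ (X N σ ρ x) = X N τ ρ x)
    (hXde : ∀ N, ∀ σ ∈ Set.Icc (0 : ℝ) t, ∀ x ∈ galerkinSpace φ N, ∀ τ ∈ Set.Icc (0 : ℝ) t,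
      X N τ σ x = x + ∫ ρ in σ..τ,
        (projN φ N (Aop φ lam (projN φ N (X N ρ σ x))) +
          u ρ • projN φ N (BopTri φ b (projN φ N (X N ρ σ x)))))
    -- L j dominates the moduli of all matrix elements with indices ≤ j
    (L : ℕ → ℝ) (hL : ∀ j p q : ℕ, p ≤ j → q ≤ j → ‖b p q‖ ≤ L j)
    (N n : ℕ) (hn : 1 ≤ n) (hnN : n ≤ N) :
    ‖projN φ N (Υ t (φ n)) - X N t 0 (φ n)‖ ≤
      (3 : ℝ) ^ (N - n) / (Nat.factorial (N - n)) * L (N + 1) *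
        (∏ j ∈ Finset.Icc (N + 1) (2 * N - n), L j) *
          (∫ τ in (0 : ℝ)..t, |u τ|) ^ (N - n + 1) := by
  obtain ⟨⟨Ku, hKu⟩, hur, hui⟩ := hu.exists_piece
  obtain ⟨K, hK, hK0, hK1, hK2⟩ := exists_coupling_bound hpos hmono hskew hratio hrk hbd2 hbd3
  obtain ⟨C, hC, hb⟩ := exists_commutator_bound hpos hmono hratio hk hbd1
  have hV0 : 0 ≤ ∫ τ in (0 : ℝ)..t, |u τ| :=
    intervalIntegral.integral_nonneg ht fun _ _ => abs_nonneg _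
  have hL0 : ∀ j, 0 ≤ L j := fun j => (norm_nonneg _).trans (hL j j j le_rfl le_rfl)
  have hφ1 : ‖φ n‖ = 1 := φ.orthonormal.1 n
  -- the trajectory of `φ n`: `B` is bounded along it by the energy estimate
  have hdom : φ n ∈ domAs φ lam ((k : ℝ) / 2) :=
    summable_of_hasFiniteSupport ((Set.finite_singleton n).subset fun j hj => by
      by_contra h
      simp only [Set.mem_singleton_iff] at h
      simp [repr_basis, h] at hj)
  have htr := htraj (φ n) hdom
  set y : ℝ → H := fun σ => Υ σ (φ n) with hy
  have hy1 : ∀ s, ‖y s‖ = 1 := fun s => by simp [hy, hφ1]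
  have hyeq : ∀ s ∈ Set.Icc 0 t, y s = φ n + ∫ σ in (0 : ℝ)..s,
      (Aop φ lam (y σ) + u σ • BopTri φ b (y σ)) := fun s hs => (htr s hs).2.1
  set Q : ℝ := Real.exp (c * ∫ σ in (0 : ℝ)..t, |u σ|) * sNorm φ lam ((k : ℝ) / 2) (φ n) with hQ
  have hB : ∀ s ∈ Set.Icc 0 t, (Summable fun j => ‖triAct b (fun i => φ.repr (y s) i) j‖ ^ 2) ∧
      ∑' j, ‖triAct b (fun i => φ.repr (y s) i) j‖ ^ 2 ≤ 9 * K * Q ^ 2 := by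
    intro s hs
    obtain ⟨h1, -, h3⟩ := htr s hs
    have h1' : Summable fun j => lam j ^ k * ‖φ.repr (y s) j‖ ^ 2 := by
      simpa only [domAs, Set.mem_ofPred_eq, weight_rpow] using h1
    simp only [sNorm, weight_rpow] at h3
    have h4 : ∑' j, lam j ^ k * ‖φ.repr (y s) j‖ ^ 2 ≤ Q ^ 2 := by
      rw [← Real.sq_sqrt (tsum_nonneg fun j => mul_nonneg (pow_nonneg (hpos j).le k)
        (sq_nonneg ‖φ.repr (y s) j‖))]
      exact pow_le_pow_left₀ (Real.sqrt_nonneg _) h3 2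
    obtain ⟨h5, h6⟩ := triAct_summable hpos hK hK0 hK1 hK2 h1'
    exact ⟨h5, h6.trans (mul_le_mul_of_nonneg_left h4 (by positivity))⟩
  have hGi := trajectory_integrable φ hpos hmono hskew hC hb ht hKu hur hui hyeq hy1 hB
  obtain ⟨⟨hyc, hyd⟩, hyA⟩ := trajectory_energy φ hpos hmono hskew hC hb ht hur hui hGi hyeq hy1
    (fun s hs => (hB s hs).1)
  have hyone : ∀ s ∈ Set.Icc 0 t, ∀ m, ∑ j ∈ Finset.range m, ‖φ.repr (y s) j‖ ^ 2 ≤ 1 :=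
    fun s _ m => by simpa [hy1 s] using sum_norm_sq_repr_le φ (y s) m
  have htail := tail_mass hskew hL (N := N) ht hur hui (x := fun s j => φ.repr (y s) j) (n := n)
    hyc hyd hyone (fun j => by simp [hy, hΥ0, repr_basis]) (N - n) le_rfl
  -- the Galerkin trajectory of `φ n`
  have hmem : φ n ∈ galerkinSpace φ N := fun j hj => by
    rw [repr_basis, if_neg (by omega)]
  set x : ℝ → H := fun σ => X N σ 0 (φ n) with hx
  have hxm : ∀ s, x s ∈ galerkinSpace φ N := fun s => hXmem N s 0 _ hmem
  have hx1 : ∀ s, ‖x s‖ = 1 := fun s => (hXnorm N s 0 _ hmem).trans hφ1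
  have hxeq := hXde N 0 ⟨le_rfl, ht⟩ (φ n) hmem
  have hXi := galerkin_integrable φ ht hKu hui hxeq hx1 hxm
  have hxc := continuousOn_repr φ
    ((continuousOn_const.add (continuousOn_integral_Icc ht hXi)).congr hxeq)
  have hdiff := difference_bound (lam := lam) hskew ht hur hui
    (w := fun s j => φ.repr (y s) j - φ.repr (x s) j)
    (g := fun s j => φ.repr (Aop φ lam (y s) + u s • BopTri φ b (y s)) j -
      φ.repr (projN φ N (Aop φ lam (projN φ N (x s))) +
        u s • projN φ N (BopTri φ b (projN φ N (x s)))) j)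
    (N := N) (i := N - n) (ℓ := L (N + 1)) (D := ∏ j ∈ Finset.range (N - n), L (N + 1 + j))
    (Finset.prod_nonneg fun _ _ => hL0 _) (hL _ _ _ (Nat.le_succ N) le_rfl)
    (fun j => (hyc j).sub (hxc j))
    (fun j _ => (intervalIntegrable_repr φ hGi j).sub (intervalIntegrable_repr φ hXi j))
    (fun j _ s hs => by
      have hsub : Set.uIcc 0 s ⊆ Set.uIcc 0 t := by
        rw [Set.uIcc_of_le hs.1, Set.uIcc_of_le ht]
        exact Set.Icc_subset_Icc_right hs.2
      rw [intervalIntegral.integral_sub ((intervalIntegrable_repr φ hGi j).mono_set hsub)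
        ((intervalIntegrable_repr φ hXi j).mono_set hsub), repr_primitive φ hGi hyeq j s hs,
        repr_primitive φ hXi hxeq j s hs]
      ring)
    (fun j hj s hs => by
      rw [galerkin_repr φ lam b (hxm s), if_pos hj, map_add, lp.coeFn_add, Pi.add_apply,
        repr_real_smul, (Aop_repr φ (hyA s hs).1).1, (BopTri_repr φ (hB s hs).1).1]
      simp only [triAct]
      split_ifs <;> ring)
    (fun s hs => by
      have h1 := htail s hs
      rw [show n + (N - n) + 1 = N + 1 by omega] at h1
      refine le_trans ?_ h1
      rw [hxm s (N + 1) (Nat.lt_succ_self N), sub_zero]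
      refine Real.le_sqrt_of_sq_le ?_
      have := hyone s hs (N + 1 + 1)
      rw [Finset.sum_range_succ] at this
      linarith)
    t ⟨ht, le_rfl⟩
  have hnorm : ‖projN φ N (y t) - x t‖ =
      √(∑ j ∈ Finset.range (N + 1), ‖φ.repr (y t) j - φ.repr (x t) j‖ ^ 2) := by
    rw [← Real.sqrt_sq (norm_nonneg (projN φ N (y t) - x t))]
    congr 1
    refine (hasSum_norm_sq_repr φ _).unique ?_
    have hco : ∀ j, φ.repr (projN φ N (y t) - x t) j =
        if j ≤ N then φ.repr (y t) j - φ.repr (x t) j else 0 := fun j => by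
      rw [map_sub, lp.coeFn_sub, Pi.sub_apply, projN_repr]
      split_ifs with h
      · rfl
      · rw [hxm t j (not_le.mp h), sub_zero]
    simp_rw [hco]
    have hsum : HasSum (fun j => ‖if j ≤ N then φ.repr (y t) j - φ.repr (x t) j else 0‖ ^ 2)
        (∑ j ∈ Finset.range (N + 1),
          ‖if j ≤ N then φ.repr (y t) j - φ.repr (x t) j else 0‖ ^ 2) :=
      hasSum_sum_of_ne_finset_zero fun j hj => by
        rw [if_neg (by simpa using hj)]; simp
    convert hsum using 1
    refine Finset.sum_congr rfl fun j hj => ?_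
    rw [if_pos (Nat.lt_succ_iff.mp (Finset.mem_range.mp hj))]
  have hprod : ∏ j ∈ Finset.Icc (N + 1) (2 * N - n), L j =
      ∏ j ∈ Finset.range (N - n), L (N + 1 + j) := by
    rw [show Finset.Icc (N + 1) (2 * N - n) = Finset.Ico (N + 1) (2 * N - n + 1) by
      ext j; simp, Finset.prod_Ico_eq_prod_range]
    congr 2
    omega
  change ‖projN φ N (y t) - x t‖ ≤ _
  rw [hnorm, hprod]
  refine hdiff.trans ?_
  -- the constant `1 / (N - n + 1)!` obtained here is better than `3 ^ (N - n) / (N - n)!`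
  set D := ∏ j ∈ Finset.range (N - n), L (N + 1 + j) with hD
  have hD0 : 0 ≤ D := Finset.prod_nonneg fun _ _ => hL0 _
  have h3 : (1 : ℝ) / (N - n + 1).factorial ≤ 3 ^ (N - n) / (N - n).factorial := by
    gcongr
    · exact one_le_pow₀ (by norm_num)
    · omega
  calc D * L (N + 1) * ((∫ τ in (0 : ℝ)..t, |u τ|) ^ (N - n + 1) / (N - n + 1).factorial)
      = 1 / (N - n + 1).factorial *
        (L (N + 1) * D * (∫ τ in (0 : ℝ)..t, |u τ|) ^ (N - n + 1)) := by ring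
    _ ≤ 3 ^ (N - n) / (N - n).factorial *
        (L (N + 1) * D * (∫ τ in (0 : ℝ)..t, |u τ|) ^ (N - n + 1)) := by
      refine mul_le_mul_of_nonneg_right h3 ?_
      have := hL0 (N + 1)
      positivity
    _ = _ := by ring
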